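/- If G is a connected simple graph on n vertices whose E-subgraph has maximum degree at most 3, then either G admits a path decomposition of cardinality at most ⌊n/2⌋, or G is a SET graph. -/

import Mathlib

open SimpleGraph

variable {V : Type*}

/-- A path decomposition of a simple graph `G`: a list of nontrivial paths of `G`
that are pairwise edge-disjoint and together cover every edge of `G`. -/
structure PathDecomp (G : SimpleGraph V) where
  paths : List (Σ a b : V, G.Walk a b)
  nontrivial : ∀ p ∈ paths, 0 < p.2.2.length
  isPath : ∀ p ∈ paths, p.2.2.IsPath
  edgeDisjoint : paths.Pairwise fun p q => ∀ e, e ∈ p.2.2.edges → e ∉ q.2.2.edges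
  covers : ∀ e ∈ G.edgeSet, ∃ p ∈ paths, e ∈ p.2.2.edges

/-- Cardinality of a path decomposition. -/
def pdCard {G : SimpleGraph V} (D : PathDecomp G) : ℕ := D.paths.length

/-- `ends D u` is the number of paths in `D` having `u` as an end vertex. -/
def ends [DecidableEq V] {G : SimpleGraph V} (D : PathDecomp G) (u : V) : ℕ :=
  (D.paths.filter fun p => p.1 = u ∨ p.2.1 = u).length

/-- The path number: minimum cardinality of a path decomposition. -/
noncomputable def pn (G : SimpleGraph V) : ℕ :=
  sInf {n | ∃ D : PathDecomp G, pdCard D = n}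

/-- Degree as the `ncard` of the neighbor set (no decidability needed). -/
noncomputable def ndeg (G : SimpleGraph V) (v : V) : ℕ := {w | G.Adj v w}.ncard

/-- A SET graph: the set of even-degree vertices consists of exactly three
mutually adjacent vertices, and every odd-degree vertex has at least two
even-degree neighbors. -/
def IsSETGraph (G : SimpleGraph V) : Prop :=
  (∃ a b c : V, a ≠ b ∧ a ≠ c ∧ b ≠ c ∧
      {v : V | Even (ndeg G v)} = {a, b, c} ∧
      G.Adj a b ∧ G.Adj a c ∧ G.Adj b c) ∧
  ∀ v : V, Odd (ndeg G v) →
    ∃ w₁ w₂ : V, w₁ ≠ w₂ ∧ G.Adj v w₁ ∧ G.Adj v w₂ ∧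
      Even (ndeg G w₁) ∧ Even (ndeg G w₂)

/-!
An edge `ab` can be added to a path decomposition by prolonging a path that ends at `b` to `a`; if
`a` already lies on all paths ending at `b`, one first rotates such a path, trading the edge at `a`
for `ab` and thereby moving the path end to another neighbour of `a`. Counting the vertices reached
by successive rotations shows that one of the edges from `a` to a set `B` can be added, at the cost
of moving one path end from that vertex of `B` to `a`, as soon as the path ends at `B` outnumber the
neighbours of `a` that are not path ends.

The theorem is proved by induction on the edge set, for edge sets without a union of components of
SET type. If no even vertex is incident with an edge, the decomposition can be given exactly one
path end at each odd vertex, so there are at most `n / 2` paths. Otherwise one removes a few edges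
near the even vertices (a star, a triangle, a path, ...) in such a way that the remaining edge set
satisfies the induction hypothesis and most of the vertices involved become odd. By parity every
odd vertex is an end of a path, and these path ends pay for adding the removed edges again without
increasing the number of paths. When none of these reductions applies, the even vertices form
isolated vertices and triangles, and the component of an even vertex of positive degree is of SET
type.
-/

/-! ### Families of paths -/

section PathFamilies

/-- The multiset of edges traversed by a list of vertices. -/
def pathEdges : List V → Multiset (Sym2 V)
  | [] => 0
  | [_] => 0
  | x :: y :: l => s(x, y) ::ₘ pathEdges (y :: l)

/-- The two ends of a list of vertices. The vertex of a one-element list counts twice, so that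
trivial paths may be used to absorb prescribed path ends. -/
def pathEnds (l : List V) : Multiset V :=
  (l.head?.toList : Multiset V) + (l.getLast?.toList : Multiset V)

lemma pathEdges_append_cons (p q : List V) (a : V) :
    pathEdges (p ++ a :: q) = pathEdges (p ++ [a]) + pathEdges (a :: q) := by
  induction p with
  | nil => simp [pathEdges]
  | cons x t ih => cases t <;> simp_all [pathEdges]

lemma pathEdges_append_cons_of_getLast? {p : List V} {y : V} (hy : p.getLast? = some y)
    (a : V) (q : List V) :
    pathEdges (p ++ a :: q) = s(a, y) ::ₘ (pathEdges p + pathEdges (a :: q)) := by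
  obtain ⟨p, rfl⟩ := List.getLast?_eq_some_iff.1 hy
  rw [List.append_assoc, List.singleton_append, pathEdges_append_cons, Sym2.eq_swap]
  simp [pathEdges]

lemma pathEdges_reverse (l : List V) : pathEdges l.reverse = pathEdges l := by
  induction l with
  | nil => rfl
  | cons x t ih =>
    cases t with
    | nil => rfl
    | cons y t =>
      rw [List.reverse_cons, pathEdges_append_cons_of_getLast? (y := y) (by simp), ih]
      simp [pathEdges]

lemma pathEnds_reverse (l : List V) : pathEnds l.reverse = pathEnds l := by
  simp [pathEnds, add_comm]

lemma pathEnds_append_cons_of_head? {p : List V} {x : V} (hx : p.head? = some x) (a : V)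
    (q : List V) :
    pathEnds (p ++ a :: q) = x ::ₘ ((a :: q).getLast?.toList : Multiset V) := by
  simp [pathEnds, hx, List.getLast?_append, List.getLast?_cons]

lemma pathEnds_cons_cons (a b : V) (l : List V) :
    b ::ₘ pathEnds (a :: b :: l) = a ::ₘ pathEnds (b :: l) := by
  simpa [pathEnds] using List.Perm.swap a b _

lemma pathEdges_rotate {p : List V} {b v : V} (hb : p.head? = some b) (hv : p.getLast? = some v)
    (a : V) (q : List V) :
    s(a, v) ::ₘ pathEdges (p.reverse ++ a :: q) = s(a, b) ::ₘ pathEdges (p ++ a :: q) := by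
  rw [pathEdges_append_cons_of_getLast? hv,
    pathEdges_append_cons_of_getLast? (List.getLast?_reverse.trans hb), pathEdges_reverse,
    Multiset.cons_swap]

lemma pathEnds_rotate {p : List V} {b v : V} (hb : p.head? = some b) (hv : p.getLast? = some v)
    (a : V) (q : List V) :
    b ::ₘ pathEnds (p.reverse ++ a :: q) = v ::ₘ pathEnds (p ++ a :: q) := by
  rw [pathEnds_append_cons_of_head? hb,
    pathEnds_append_cons_of_head? (List.head?_reverse.trans hv), Multiset.cons_swap]

/-- `D` is a family of paths whose edges partition `E`. Paths are duplicate-free lists of vertices;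
trivial one-vertex paths are allowed. -/
structure IsPathDecomp (E : Finset (Sym2 V)) (D : Multiset (List V)) : Prop where
  ne_nil : ∀ P ∈ D, P ≠ []
  nodup : ∀ P ∈ D, P.Nodup
  edges : D.bind pathEdges = E.val

namespace IsPathDecomp

variable {E E' : Finset (Sym2 V)} {D : Multiset (List V)} {P Q : List V}

lemma replace (h : IsPathDecomp E (P ::ₘ D)) (hne : Q ≠ []) (hQ : Q.Nodup)
    (hE : pathEdges Q + D.bind pathEdges = E'.val) : IsPathDecomp E' (Q ::ₘ D) where
  ne_nil := Multiset.forall_mem_cons.2 ⟨hne, (Multiset.forall_mem_cons.1 h.ne_nil).2⟩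
  nodup := Multiset.forall_mem_cons.2 ⟨hQ, (Multiset.forall_mem_cons.1 h.nodup).2⟩
  edges := by rw [Multiset.cons_bind, hE]

lemma reverse_head (h : IsPathDecomp E (P ::ₘ D)) : IsPathDecomp E (P.reverse ::ₘ D) :=
  h.replace (by simpa using h.ne_nil P (Multiset.mem_cons_self P D))
    (by simpa using h.nodup P (Multiset.mem_cons_self P D))
    (by rw [pathEdges_reverse, ← Multiset.cons_bind, h.edges])

end IsPathDecomp

variable [DecidableEq V]

lemma even_countP_pathEdges_add_count_pathEnds {l : List V} (hl : l.Nodup) (v : V) :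
    Even ((pathEdges l).countP (v ∈ ·) + (pathEnds l).count v) := by
  induction l with
  | nil => simp [pathEdges, pathEnds]
  | cons x t ih =>
    cases t with
    | nil => by_cases hv : v = x <;> simp [pathEdges, pathEnds, hv]
    | cons y t =>
      have hxy : x ≠ y := by rintro rfl; simp at hl
      have ih := ih (List.nodup_cons.1 hl).2
      have hends := congrArg (Multiset.count v) (pathEnds_cons_cons x y t)
      simp only [Multiset.count_cons, pathEdges, Multiset.countP_cons, Sym2.mem_iff] at hends ⊢
      grind

/-- The number of path ends of the family `D` at the vertex `v`. -/
def endCount (D : Multiset (List V)) (v : V) : ℕ := (D.bind pathEnds).count v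

/-- The number of edges of `E` incident with `v`. -/
def edgeDeg (E : Finset (Sym2 V)) (v : V) : ℕ := (E.filter (v ∈ ·)).card

/-- The edges joining `a` to the vertices of `B`. -/
def starEdges (a : V) (B : Finset V) : Finset (Sym2 V) := B.image fun b => s(a, b)

lemma even_countP_bind_pathEdges_add_endCount {D : Multiset (List V)} (hD : ∀ P ∈ D, P.Nodup)
    (v : V) : Even ((D.bind pathEdges).countP (v ∈ ·) + endCount D v) := by
  induction D using Multiset.induction_on with
  | empty => simp [endCount]
  | cons P D ih =>
    have hP := even_countP_pathEdges_add_count_pathEnds (hD P (Multiset.mem_cons_self P D)) v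
    have hD := ih fun Q hQ => hD Q (Multiset.mem_cons_of_mem hQ)
    simp only [endCount, Multiset.cons_bind, Multiset.countP_add, Multiset.count_add] at hD ⊢
    rw [add_add_add_comm]
    exact hP.add hD

lemma IsPathDecomp.even_edgeDeg_add_endCount {E : Finset (Sym2 V)} {D : Multiset (List V)}
    (h : IsPathDecomp E D) (v : V) :
    Even (edgeDeg E v + endCount D v) := by
  have := even_countP_bind_pathEdges_add_endCount h.nodup v
  rwa [h.edges, Multiset.countP_eq_card_filter] at this

end PathFamilies

/-! ### Rotations -/

section Rotations

/-- `Q` is a path of the family `D`, traversed in one of its two directions. -/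
def Traverses (D : Multiset (List V)) (Q : List V) : Prop := Q ∈ D ∨ Q.reverse ∈ D

/-- Some path of `D` starts at `x`, later passes through `a`, and meets `y` just before `a`. Then
the edge `ya` can be traded for `xa`: rotating the path at `a` makes it start at `y`. -/
def RotatesTo (D : Multiset (List V)) (a x y : V) : Prop :=
  ∃ p q, Traverses D (p ++ a :: q) ∧ p.head? = some x ∧ p.getLast? = some y

/-- Some path of `D` that avoids `a` ends at `x`, so that it can be prolonged to `a`. -/
def ProlongsTo (D : Multiset (List V)) (a x : V) : Prop :=
  ∃ t, Traverses D (x :: t) ∧ a ∉ x :: t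

lemma traverses_cons {D : Multiset (List V)} {P Q : List V} :
    Traverses (P ::ₘ D) Q ↔ Q = P ∨ Q = P.reverse ∨ Traverses D Q := by
  rw [Traverses, Traverses, Multiset.mem_cons, Multiset.mem_cons, List.reverse_eq_iff]
  tauto

lemma Traverses.reverse {D : Multiset (List V)} {Q : List V} (h : Traverses D Q) :
    Traverses D Q.reverse := by
  simpa [Traverses, or_comm] using h

variable {E : Finset (Sym2 V)} {D : Multiset (List V)} {a b v x y : V}

lemma Traverses.exists_cons {Q : List V} (hQ : Traverses D Q) (h : IsPathDecomp E D) :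
    ∃ D₀, IsPathDecomp E (Q ::ₘ D₀) ∧ (Q ::ₘ D₀).card = D.card ∧
      (Q ::ₘ D₀).bind pathEnds = D.bind pathEnds ∧ ∀ R, Traverses D R ↔ Traverses (Q ::ₘ D₀) R := by
  rcases hQ with hQ | hQ <;> obtain ⟨D₀, rfl⟩ := Multiset.exists_cons_of_mem hQ
  · exact ⟨D₀, h, rfl, rfl, fun R => Iff.rfl⟩
  · refine ⟨D₀, by simpa using h.reverse_head, by simp, by simp [pathEnds_reverse], fun R => ?_⟩
    rw [traverses_cons, traverses_cons, List.reverse_reverse]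
    tauto

lemma Traverses.nodup {Q : List V} (hQ : Traverses D Q) (h : IsPathDecomp E D) : Q.Nodup := by
  obtain ⟨D₀, h₀, -⟩ := hQ.exists_cons h
  exact h₀.nodup Q (Multiset.mem_cons_self Q D₀)

lemma Traverses.mem_of_mem_pathEdges {Q : List V} (hQ : Traverses D Q) (h : IsPathDecomp E D)
    {e : Sym2 V} (he : e ∈ pathEdges Q) : e ∈ E := by
  obtain ⟨D₀, h₀, -⟩ := hQ.exists_cons h
  rw [← Finset.mem_val, ← h₀.edges, Multiset.cons_bind, Multiset.mem_add]
  exact Or.inl he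

lemma RotatesTo.mem (hxy : RotatesTo D a x y) (h : IsPathDecomp E D) : s(a, y) ∈ E := by
  obtain ⟨p, q, htr, -, hy⟩ := hxy
  refine htr.mem_of_mem_pathEdges h ?_
  simp [pathEdges_append_cons_of_getLast? hy]

lemma RotatesTo.ne (hxy : RotatesTo D a x y) (h : IsPathDecomp E D) : y ≠ a := by
  obtain ⟨p, q, htr, -, hy⟩ := hxy
  rintro rfl
  exact (List.nodup_append.1 (htr.nodup h)).2.2 y (List.mem_of_getLast? hy) y (by simp) rfl

lemma traverses_rotate {D₀ : Multiset (List V)} {p q p' q' : List V} (hnd : (p ++ a :: q).Nodup)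
    (hp : p' ≠ p) (htr : Traverses ((p ++ a :: q) ::ₘ D₀) (p' ++ a :: q')) :
    ∃ r, Traverses ((p.reverse ++ a :: q) ::ₘ D₀) (p' ++ a :: r) := by
  have ha : a ∉ p ∧ a ∉ q := by grind [List.nodup_append]
  rcases traverses_cons.1 htr with heq | heq | htr
  · exact absurd ((List.append_cons_inj_of_notMem ha.1 ha.2).1 heq.symm).1.symm hp
  · refine ⟨p, traverses_cons.2 <| Or.inr <| Or.inl ?_⟩
    rw [List.reverse_append, List.reverse_cons, List.append_assoc, List.singleton_append] at heq
    obtain ⟨rfl, -, -⟩ := (List.append_cons_inj_of_notMem (by simpa using ha.2)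
      (by simpa using ha.1)).1 heq.symm
    simp
  · exact ⟨q', traverses_cons.2 <| Or.inr <| Or.inr htr⟩

lemma Traverses.prolongsTo {P : List V} (hP : Traverses D P) (ha : a ∉ P) (hx : x ∈ pathEnds P) :
    ProlongsTo D a x := by
  simp only [pathEnds, Multiset.mem_add, Multiset.mem_coe, Option.mem_toList] at hx
  rcases hx with hx | hx
  · obtain ⟨t, rfl⟩ := List.head?_eq_some_iff.1 hx
    exact ⟨t, hP, ha⟩
  · obtain ⟨t, rfl⟩ := List.getLast?_eq_some_iff.1 hx
    exact ⟨t.reverse, by simpa using hP.reverse, by simpa [or_comm] using ha⟩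

variable [DecidableEq V]

/-- The edge `ab` can be added to the path decomposition `D` of `E`, at the cost of moving one path
end from `b` to `a`. -/
def Attaches (E : Finset (Sym2 V)) (D : Multiset (List V)) (a b : V) : Prop :=
  ∃ D', IsPathDecomp (insert s(a, b) E) D' ∧ D'.card = D.card ∧
    b ::ₘ D'.bind pathEnds = a ::ₘ D.bind pathEnds

lemma IsPathDecomp.attaches_of_prolongsTo (h : IsPathDecomp E D) (hab : s(a, b) ∉ E)
    (hb : ProlongsTo D a b) : Attaches E D a b := by
  obtain ⟨t, htr, ha⟩ := hb
  obtain ⟨D₀, h₀, hcard, hends, -⟩ := htr.exists_cons h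
  refine ⟨(a :: b :: t) ::ₘ D₀, h₀.replace (by simp) ?_ ?_, by simpa using hcard, ?_⟩
  · exact List.nodup_cons.2 ⟨ha, htr.nodup h⟩
  · rw [Finset.insert_val_of_notMem hab, ← h₀.edges, Multiset.cons_bind, ← Multiset.cons_add]
    rfl
  · rw [← hends, Multiset.cons_bind, Multiset.cons_bind, ← Multiset.cons_add,
      ← Multiset.cons_add, pathEnds_cons_cons]

lemma IsPathDecomp.exists_rotate (h : IsPathDecomp E D) (hab : s(a, b) ∉ E)
    (hbv : RotatesTo D a b v) :
    ∃ D', IsPathDecomp (insert s(a, b) (E.erase s(a, v))) D' ∧ D'.card = D.card ∧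
      b ::ₘ D'.bind pathEnds = v ::ₘ D.bind pathEnds ∧
      (∀ x y, y ≠ v → RotatesTo D a x y → RotatesTo D' a x y) ∧
      ∀ x, ProlongsTo D a x → ProlongsTo D' a x := by
  have hav := hbv.mem h
  obtain ⟨p, q, htr, hb, hv⟩ := hbv
  have hnd := htr.nodup h
  obtain ⟨D₀, h₀, hcard, hends, htraverses⟩ := htr.exists_cons h
  refine ⟨(p.reverse ++ a :: q) ::ₘ D₀, h₀.replace (by simp) ?_ ?_, by simpa using hcard, ?_,
    ?_, ?_⟩
  · exact ((List.reverse_perm p).append_right _).nodup_iff.2 hnd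
  · have hrot : s(a, v) ::ₘ (pathEdges (p.reverse ++ a :: q) + D₀.bind pathEdges) =
        s(a, b) ::ₘ E.val := by
      rw [← h₀.edges, Multiset.cons_bind, ← Multiset.cons_add, ← Multiset.cons_add,
        pathEdges_rotate hb hv]
    rw [Finset.insert_val_of_notMem fun he => hab (Finset.mem_of_mem_erase he), Finset.erase_val,
      ← Multiset.erase_cons_tail _ (fun he : s(a, b) = s(a, v) => hab (he ▸ hav)),
      ← hrot, Multiset.erase_cons_head]
  · rw [← hends, Multiset.cons_bind, Multiset.cons_bind, ← Multiset.cons_add,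
      ← Multiset.cons_add, pathEnds_rotate hb hv]
  · rintro x y hy ⟨p', q', htr', hx, hy'⟩
    obtain ⟨r, hr⟩ := traverses_rotate hnd (by rintro rfl; simp_all) ((htraverses _).1 htr')
    exact ⟨p', r, hr, hx, hy'⟩
  · rintro x ⟨t, ht, ha⟩
    refine ⟨t, ?_, ha⟩
    rcases traverses_cons.1 ((htraverses _).1 ht) with heq | heq | ht
    · simp [heq] at ha
    · simp [heq] at ha
    · exact traverses_cons.2 <| Or.inr <| Or.inr ht

lemma IsPathDecomp.attaches_of_isChain (h : IsPathDecomp E D) (hab : s(a, b) ∉ E) {l : List V}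
    (hl : List.IsChain (RotatesTo D a) (b :: l))
    (hlast : ProlongsTo D a ((b :: l).getLast (List.cons_ne_nil b l))) : Attaches E D a b := by
  induction hn : l.length using Nat.strong_induction_on generalizing E D b l with
  | _ n ih =>
    subst hn
    cases l with
    | nil => exact h.attaches_of_prolongsTo hab hlast
    | cons v t =>
      obtain ⟨hbv, ht⟩ := List.isChain_cons_cons.1 hl
      by_cases hvt : v ∈ t
      · obtain ⟨t₁, t₂, rfl⟩ := List.append_of_mem hvt
        refine ih (v :: t₂).length (by simp) h hab ?_ (by simpa using hlast) rfl
        exact List.isChain_cons_cons.2 ⟨hbv, ht.right_of_append (l₁ := v :: t₁)⟩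
      · obtain ⟨D', hD', hcard, hends, hrot, hprol⟩ := h.exists_rotate hab hbv
        have hav : s(a, v) ∈ E := hbv.mem h
        have hav' : s(a, v) ∉ insert s(a, b) (E.erase s(a, v)) := by
          simp only [Finset.mem_insert, Finset.mem_erase, ne_eq, not_true_eq_false, false_and,
            or_false]
          exact fun he => hab (he ▸ hav)
        obtain ⟨D'', hD'', hcard', hends'⟩ := ih t.length (by simp) hD' hav'
          (ht.imp_of_mem_tail_imp fun x y _ hy => hrot x y fun hyv => hvt (hyv ▸ hy))
          (hprol _ (by simpa using hlast)) rfl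
        rw [Finset.insert_comm, Finset.insert_erase hav] at hD''
        refine ⟨D'', hD'', hcard'.trans hcard, (Multiset.cons_inj_right v).1 ?_⟩
        rw [Multiset.cons_swap, hends', Multiset.cons_swap, hends, Multiset.cons_swap]

lemma Traverses.ite_mem_le_countP {p q : List V} (htr : Traverses D (p ++ a :: q)) {S : Finset V}
    (haS : a ∉ S) (hS : ∀ x ∈ S, ∀ y, RotatesTo D a x y → y ∈ S) (hx : (p ++ [a]).head? = some x) :
    (if x ∈ S then 1 else 0) ≤ (pathEdges (p ++ [a])).countP (· ∈ starEdges a S) := by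
  split_ifs with hxS
  · cases hy : p.getLast? with
    | none => simp_all
    | some y =>
      have hx : p.head? = some x := by cases p <;> simp_all
      rw [Nat.one_le_iff_ne_zero, ← Nat.pos_iff_ne_zero, Multiset.countP_pos]
      refine ⟨s(a, y), ?_, Finset.mem_image_of_mem _ (hS x hxS y ⟨p, q, htr, hx, hy⟩)⟩
      simp [pathEdges_append_cons_of_getLast? hy]
  · exact Nat.zero_le _

lemma countP_pathEnds_le {P : List V} (hP : P ∈ D) {S : Finset V} (haS : a ∉ S)
    (hS : ∀ x ∈ S, ∀ y, RotatesTo D a x y → y ∈ S) (hfree : ∀ x ∈ S, ¬ ProlongsTo D a x) :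
    (pathEnds P).countP (· ∈ S) ≤ (pathEdges P).countP (· ∈ starEdges a S) := by
  have htr : Traverses D P := Or.inl hP
  by_cases haP : a ∈ P
  · obtain ⟨p, q, rfl⟩ := List.append_of_mem haP
    obtain ⟨x, hx⟩ : ∃ x, (p ++ [a]).head? = some x := Option.isSome_iff_exists.1 (by simp)
    obtain ⟨y, hy⟩ : ∃ y, (q.reverse ++ [a]).head? = some y := Option.isSome_iff_exists.1 (by simp)
    have hends : pathEnds (p ++ a :: q) = {x, y} := by
      have hhead : (p ++ a :: q).head? = some x := by cases p <;> simp_all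
      have hlast : (p ++ a :: q).getLast? = some y := by
        rw [← List.head?_reverse, List.reverse_append, List.reverse_cons, List.append_assoc]
        cases q using List.reverseRecOn <;> simp_all
      rw [pathEnds, hhead, hlast]
      rfl
    have htr' : Traverses D (q.reverse ++ a :: p.reverse) := by simpa using htr.reverse
    have hq : pathEdges (q.reverse ++ [a]) = pathEdges (a :: q) := by
      rw [← pathEdges_reverse, List.reverse_append, List.reverse_reverse]
      rfl
    have hp := htr.ite_mem_le_countP haS hS hx
    have hp' := htr'.ite_mem_le_countP haS hS hy
    rw [hq] at hp'
    rw [hends, pathEdges_append_cons, Multiset.countP_add, Multiset.insert_eq_cons,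
      ← Multiset.cons_zero y, Multiset.countP_cons, Multiset.countP_cons, Multiset.countP_zero]
    omega
  · rw [Multiset.countP_eq_zero.2 fun x hx hxS => hfree x hxS (htr.prolongsTo haP hx)]
    exact Nat.zero_le _

lemma countP_bind_le_countP_bind {α β γ : Type*} {s : Multiset α} {f : α → Multiset β}
    {g : α → Multiset γ} {p : β → Prop} {q : γ → Prop} [DecidablePred p] [DecidablePred q]
    (h : ∀ a ∈ s, (f a).countP p ≤ (g a).countP q) : (s.bind f).countP p ≤ (s.bind g).countP q := by
  induction s using Multiset.induction_on with
  | empty => simp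
  | cons a s ih =>
    simp only [Multiset.cons_bind, Multiset.countP_add]
    rw [Multiset.forall_mem_cons] at h
    exact Nat.add_le_add h.1 (ih h.2)

lemma sum_endCount_eq_countP (D : Multiset (List V)) (S : Finset V) :
    ∑ v ∈ S, endCount D v = (D.bind pathEnds).countP (· ∈ S) := by
  rw [Multiset.countP_eq_card_filter,
    ← Multiset.sum_count_eq_card fun v hv => (Multiset.mem_filter.1 hv).2]
  exact Finset.sum_congr rfl fun v hv => (Multiset.count_filter_of_pos hv).symm

lemma IsPathDecomp.sum_endCount_le (h : IsPathDecomp E D) {S : Finset V} (haS : a ∉ S)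
    (hS : ∀ x ∈ S, ∀ y, RotatesTo D a x y → y ∈ S) (hfree : ∀ x ∈ S, ¬ ProlongsTo D a x) :
    ∑ v ∈ S, endCount D v ≤ (S.filter (s(a, ·) ∈ E)).card :=
  calc ∑ v ∈ S, endCount D v = (D.bind pathEnds).countP (· ∈ S) := sum_endCount_eq_countP D S
    _ ≤ (D.bind pathEdges).countP (· ∈ starEdges a S) :=
      countP_bind_le_countP_bind fun _ hP => countP_pathEnds_le hP haS hS hfree
    _ = (E.filter (· ∈ starEdges a S)).card := by
      rw [h.edges, Multiset.countP_eq_card_filter]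
      rfl
    _ ≤ (starEdges a (S.filter (s(a, ·) ∈ E))).card := Finset.card_le_card fun e he => by
      simp only [starEdges, Finset.mem_filter, Finset.mem_image] at he ⊢
      obtain ⟨he, v, hv, rfl⟩ := he
      exact ⟨v, ⟨hv, he⟩, rfl⟩
    _ ≤ (S.filter (s(a, ·) ∈ E)).card := Finset.card_image_le

lemma IsPathDecomp.exists_attaches_or_sum_endCount_le [Finite V] (h : IsPathDecomp E D)
    {B : Finset V} (haB : a ∉ B) (hB : ∀ b ∈ B, s(a, b) ∉ E) :
    (∃ b ∈ B, Attaches E D a b) ∨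
    ∃ W : Finset V, (∀ w ∈ W, s(a, w) ∈ E) ∧
      ∑ v ∈ B, endCount D v + ∑ v ∈ W, endCount D v ≤ W.card := by
  classical
  have := Fintype.ofFinite V
  -- The vertices reachable from `B` by rotations at `a`.
  let S : Finset V := {x | ∃ b ∈ B, Relation.ReflTransGen (RotatesTo D a) b x}
  by_cases hprol : ∃ x ∈ S, ProlongsTo D a x
  · obtain ⟨x, hx, hprol⟩ := hprol
    obtain ⟨b, hb, hbx⟩ := (Finset.mem_filter.1 hx).2
    obtain ⟨l, hl, rfl⟩ := List.exists_isChain_cons_of_relationReflTransGen hbx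
    exact Or.inl ⟨b, hb, h.attaches_of_isChain (hB b hb) hl hprol⟩
  · push Not at hprol
    have hclosed : ∀ x ∈ S, ∀ y, RotatesTo D a x y → y ∈ S := fun x hx y hxy => by
      obtain ⟨b, hb, hbx⟩ := (Finset.mem_filter.1 hx).2
      exact Finset.mem_filter.2 ⟨Finset.mem_univ y, b, hb, hbx.tail hxy⟩
    have hmem : ∀ x ∈ S, x ∈ B ∨ s(a, x) ∈ E ∧ x ≠ a := fun x hx => by
      obtain ⟨b, hb, hbx⟩ := (Finset.mem_filter.1 hx).2
      rcases Relation.ReflTransGen.cases_tail hbx with rfl | ⟨y, -, hy⟩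
      · exact Or.inl hb
      · exact Or.inr ⟨hy.mem h, hy.ne h⟩
    have haS : a ∉ S := fun ha => (hmem a ha).elim haB fun h => h.2 rfl
    have hBS : B ⊆ S := fun b hb => Finset.mem_filter.2 ⟨Finset.mem_univ b, b, hb, .refl⟩
    have hfilter : S.filter (s(a, ·) ∈ E) = S \ B := by
      ext x
      simp only [Finset.mem_filter, Finset.mem_sdiff]
      grind
    refine Or.inr ⟨S \ B, fun w hw => ?_, ?_⟩
    · rw [← hfilter] at hw
      exact (Finset.mem_filter.1 hw).2
    · rw [add_comm, Finset.sum_sdiff hBS, ← hfilter]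
      exact h.sum_endCount_le haS hclosed hprol

end Rotations

/-! ### Adding edges while keeping track of path ends -/

section Calculus

variable [DecidableEq V] {E : Finset (Sym2 V)} {k : ℕ} {g g' : V → ℕ} {a b x : V} {B : Finset V}

/-- `E` is decomposed into at most `k` paths with at least `g v` path ends at each vertex `v`. -/
def HasPathDecomp (E : Finset (Sym2 V)) (k : ℕ) (g : V → ℕ) : Prop :=
  ∃ D, IsPathDecomp E D ∧ D.card ≤ k ∧ ∀ v, g v ≤ endCount D v

lemma mem_starEdges_self {v : V} : s(a, v) ∈ starEdges a B ↔ v ∈ B := by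
  simp only [starEdges, Finset.mem_image, Sym2.congr_right, exists_eq_right]

lemma mem_starEdges {u v : V} (hu : u ≠ a) : s(u, v) ∈ starEdges a B ↔ v = a ∧ u ∈ B := by
  refine ⟨fun h => ?_, fun ⟨hv, h⟩ => hv ▸ Sym2.eq_swap ▸ mem_starEdges_self.2 h⟩
  obtain ⟨b, hb, h⟩ := Finset.mem_image.1 h
  rcases Sym2.eq_iff.1 h with ⟨h, -⟩ | ⟨hv, rfl⟩
  · exact absurd h.symm hu
  · exact ⟨hv.symm, hb⟩

lemma starEdges_insert (a b : V) (B : Finset V) :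
    starEdges a (insert b B) = insert s(a, b) (starEdges a B) :=
  Finset.image_insert _ _ _

lemma HasPathDecomp.mono (h : HasPathDecomp E k g) (hg : ∀ v, g' v ≤ g v) :
    HasPathDecomp E k g' := by
  obtain ⟨D, hD, hk, hgD⟩ := h
  exact ⟨D, hD, hk, fun v => (hg v).trans (hgD v)⟩

lemma Attaches.endCount_add {D : Multiset (List V)} (h : Attaches E D a b) :
    ∃ D', IsPathDecomp (insert s(a, b) E) D' ∧ D'.card = D.card ∧
      ∀ v, endCount D' v + (if v = b then 1 else 0) = endCount D v + if v = a then 1 else 0 := by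
  obtain ⟨D', hD', hcard, hends⟩ := h
  refine ⟨D', hD', hcard, fun v => ?_⟩
  simpa only [endCount, Multiset.count_cons] using congrArg (Multiset.count v) hends

/-- The end counts `g` after one path end has moved from `b` to `a`. -/
def moveEnd (g : V → ℕ) (a b v : V) : ℕ :=
  g v + (if v = a then 1 else 0) - if v = b then 1 else 0

variable [Fintype V]

/-- The neighbours of `a` in `E` at which `g` vanishes. -/
def zeroNbrs (E : Finset (Sym2 V)) (g : V → ℕ) (a : V) : Finset V :=
  Finset.univ.filter fun v => s(a, v) ∈ E ∧ g v = 0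

lemma mem_zeroNbrs {v : V} : v ∈ zeroNbrs E g a ↔ s(a, v) ∈ E ∧ g v = 0 := by
  simp only [zeroNbrs, Finset.mem_filter_univ]

lemma card_le_card_zeroNbrs_add_sum {W : Finset V} (hW : ∀ w ∈ W, s(a, w) ∈ E) :
    W.card ≤ (zeroNbrs E g a).card + ∑ v ∈ W, g v := by
  have hpos : (W.filter fun v => g v ≠ 0).card ≤ ∑ v ∈ W, g v := by
    rw [Finset.card_filter]
    exact Finset.sum_le_sum fun v _ => by split_ifs <;> lia
  have hzero : W.filter (fun v => g v = 0) ⊆ zeroNbrs E g a := fun v hv =>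
    have := Finset.mem_filter.1 hv
    mem_zeroNbrs.2 ⟨hW v this.1, this.2⟩
  calc W.card = (W.filter fun v => g v = 0).card + (W.filter fun v => g v ≠ 0).card :=
        (Finset.card_filter_add_card_filter_not _).symm
    _ ≤ _ := add_le_add (Finset.card_le_card hzero) hpos

theorem HasPathDecomp.exists_insert (h : HasPathDecomp E k g) (haB : a ∉ B)
    (hE : ∀ b ∈ B, s(a, b) ∉ E) (hlt : (zeroNbrs E g a).card < ∑ b ∈ B, g b) :
    ∃ b ∈ B, HasPathDecomp (insert s(a, b) E) k (moveEnd g a b) := by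
  obtain ⟨D, hD, hk, hgD⟩ := h
  rcases hD.exists_attaches_or_sum_endCount_le haB hE with ⟨b, hb, hatt⟩ | ⟨W, hW, hsum⟩
  · obtain ⟨D', hD', hcard, hcount⟩ := hatt.endCount_add
    refine ⟨b, hb, D', hD', hcard ▸ hk, fun v => ?_⟩
    have := hcount v
    have := hgD v
    rw [moveEnd]
    lia
  · have hWcard := card_le_card_zeroNbrs_add_sum (g := g) hW
    have hB : ∑ b ∈ B, g b ≤ ∑ b ∈ B, endCount D b := Finset.sum_le_sum fun v _ => hgD v
    have hWsum : ∑ v ∈ W, g v ≤ ∑ v ∈ W, endCount D v := Finset.sum_le_sum fun v _ => hgD v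
    lia

lemma HasPathDecomp.insert_edge (h : HasPathDecomp E k g) (hab : a ≠ b) (hE : s(a, b) ∉ E)
    (hz : (zeroNbrs E g a).card < g b)
    (hg : ∀ v, g' v + (if v = b then 1 else 0) ≤ g v + (if v = a then 1 else 0)) :
    HasPathDecomp (insert s(a, b) E) k g' := by
  obtain ⟨b', hb', h'⟩ := h.exists_insert (B := {b}) (by simpa using hab) (by simpa using hE)
    (by simpa using hz)
  obtain rfl := Finset.mem_singleton.1 hb'
  exact h'.mono fun v => Nat.le_sub_of_add_le (hg v)

lemma HasPathDecomp.insert_edge_zero (h : HasPathDecomp E k g) (hab : a ≠ b)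
    (hE : s(a, b) ∉ E) (hz : (zeroNbrs E g a).card < g b) :
    HasPathDecomp (insert s(a, b) E) k 0 :=
  h.insert_edge hab hE hz fun v => by
    have hb : 1 ≤ g b := Nat.one_le_of_lt hz
    rw [Pi.zero_apply]
    grind

/-- The end counts `g` after the edges from `a` to `A` have been added by prolonging, for each of
them, a path that ends at its end in `A`. -/
def starShift (g : V → ℕ) (a : V) (A : Finset V) (v : V) : ℕ :=
  if v = a then g a + A.card else if v ∈ A then g v - 1 else g v

omit [Fintype V]

lemma starShift_self (g : V → ℕ) (a : V) (A : Finset V) : starShift g a A a = g a + A.card :=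
  if_pos rfl

lemma starShift_of_notMem {A : Finset V} {v : V} (hva : v ≠ a) (hv : v ∉ A) :
    starShift g a A v = g v :=
  (if_neg hva).trans (if_neg hv)

lemma starShift_empty (g : V → ℕ) (a : V) : starShift g a ∅ = g :=
  funext fun v => by rcases eq_or_ne v a with rfl | hva <;> simp [starShift, *]

lemma HasPathDecomp.exists_insert_starEdges [Finite V] {A : Finset V}
    (h : HasPathDecomp (E ∪ starEdges a A) k (starShift g a A)) (haB : a ∉ B)
    (hE : ∀ b ∈ B, s(a, b) ∉ E) (hB : ∀ b ∈ B, 1 ≤ g b) (hN : ∀ v, s(a, v) ∈ E → 1 ≤ g v)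
    (hlt : A.card < (B \ A).card) :
    ∃ b ∈ B \ A, HasPathDecomp (E ∪ starEdges a (insert b A)) k (starShift g a (insert b A)) := by
  have := Fintype.ofFinite V
  have hne {b : V} (hb : b ∈ B) : b ≠ a := fun h => haB (h ▸ hb)
  have hzero : zeroNbrs (E ∪ starEdges a A) (starShift g a A) a ⊆ A := fun v hv => by
    obtain ⟨hav, hgv⟩ := mem_zeroNbrs.1 hv
    rw [Finset.mem_union, mem_starEdges_self] at hav
    refine hav.elim (fun hav => ?_) id
    by_contra hvA
    have := hN v hav
    rcases eq_or_ne v a with rfl | hva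
    · rw [starShift_self] at hgv
      lia
    · rw [starShift_of_notMem hva hvA] at hgv
      lia
  have hsum : (B \ A).card ≤ ∑ b ∈ B \ A, starShift g a A b := by
    rw [Finset.card_eq_sum_ones]
    refine Finset.sum_le_sum fun b hb => ?_
    obtain ⟨hbB, hbA⟩ := Finset.mem_sdiff.1 hb
    exact (starShift_of_notMem (hne hbB) hbA).symm ▸ hB b hbB
  obtain ⟨b, hb, hins⟩ := h.exists_insert (a := a) (B := B \ A)
    (fun h => haB (Finset.mem_sdiff.1 h).1)
    (fun b hb => by
      rw [Finset.mem_union, mem_starEdges_self]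
      exact fun h => h.elim (hE b (Finset.mem_sdiff.1 hb).1) (Finset.mem_sdiff.1 hb).2)
    ((Finset.card_le_card hzero).trans_lt (hlt.trans_le hsum))
  refine ⟨b, hb, ?_⟩
  rw [starEdges_insert, Finset.union_insert]
  obtain ⟨hbB, hbA⟩ := Finset.mem_sdiff.1 hb
  refine hins.mono fun v => ?_
  have := hne hbB
  grind [starShift, moveEnd]

theorem HasPathDecomp.exists_half_star [Finite V] (h : HasPathDecomp E k g) (haB : a ∉ B)
    (hE : ∀ b ∈ B, s(a, b) ∉ E) (hB : ∀ b ∈ B, 1 ≤ g b) (hN : ∀ v, s(a, v) ∈ E → 1 ≤ g v) :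
    ∃ A ⊆ B, (B \ A).card ≤ A.card ∧ HasPathDecomp (E ∪ starEdges a A) k (starShift g a A) := by
  classical
  have hempty : HasPathDecomp (E ∪ starEdges a ∅) k (starShift g a ∅) := by
    rwa [starShift_empty, starEdges, Finset.image_empty, Finset.union_empty]
  obtain ⟨A, hA, hmax⟩ := Finset.exists_max_image
    (B.powerset.filter fun A => HasPathDecomp (E ∪ starEdges a A) k (starShift g a A)) Finset.card
    ⟨∅, Finset.mem_filter.2 ⟨Finset.empty_mem_powerset B, hempty⟩⟩
  simp only [Finset.mem_filter, Finset.mem_powerset] at hA hmax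
  obtain ⟨hAB, hdec⟩ := hA
  refine ⟨A, hAB, ?_, hdec⟩
  by_contra! hlt
  obtain ⟨b, hb, hins⟩ := hdec.exists_insert_starEdges haB hE hB hN hlt
  obtain ⟨hbB, hbA⟩ := Finset.mem_sdiff.1 hb
  have hle := hmax (insert b A) ⟨Finset.insert_subset hbB hAB, hins⟩
  rw [Finset.card_insert_of_notMem hbA] at hle
  lia

variable [Fintype V]

lemma HasPathDecomp.add_star (e : ℕ) (R : Finset V) (h : HasPathDecomp E k g) (hx : x ∉ R)
    (hE : ∀ r ∈ R, s(x, r) ∉ E) (hg : R.card + e ≤ g x)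
    (hz : ∀ r ∈ R, (zeroNbrs E g r).card ≤ e) :
    HasPathDecomp (E ∪ starEdges x R) k fun v => if v = x then g x - R.card else g v := by
  induction R using Finset.induction_on with
  | empty => simpa [starEdges] using h.mono fun v => by split_ifs with hv <;> simp [hv]
  | insert r R hr ih =>
    rw [Finset.forall_mem_insert] at hE hz
    rw [Finset.mem_insert, not_or] at hx
    rw [Finset.card_insert_of_notMem hr] at hg ⊢
    have hE' : s(r, x) ∉ E := Sym2.eq_swap ▸ hE.1
    rw [starEdges_insert, Finset.union_insert, Sym2.eq_swap]
    refine (ih hx.2 hE.2 (by lia) hz.2).insert_edge (Ne.symm hx.1) ?_ ?_ fun v => ?_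
    · rw [Finset.mem_union, mem_starEdges (Ne.symm hx.1)]
      exact fun hh => hh.elim hE' fun h => hr h.2
    · have hsub : zeroNbrs (E ∪ starEdges x R) (fun v => if v = x then g x - R.card else g v) r ⊆
          zeroNbrs E g r := fun v hv => by
        simp only [mem_zeroNbrs, Finset.mem_union, mem_starEdges (Ne.symm hx.1)] at hv ⊢
        obtain ⟨hv | hv, h0⟩ := hv
        · have hvx : v ≠ x := by
            rintro rfl
            exact hE' hv
          exact ⟨hv, (if_neg hvx).symm.trans h0⟩
        · exact absurd hv.2 hr
      have := (Finset.card_le_card hsub).trans hz.1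
      simp only [if_true]
      lia
    · grind

lemma HasPathDecomp.add_three {T : Finset V} (h : HasPathDecomp E k g) (hT : T.card = 3)
    (hx : x ∉ T) (hE : ∀ r ∈ T, s(x, r) ∉ E) (hgx : 1 ≤ g x) (hgT : ∀ r ∈ T, 1 ≤ g r)
    (hN : ∀ v, s(x, v) ∈ E → 1 ≤ g v)
    (hz : ∀ r ∈ T, (Finset.univ.filter fun v => s(r, v) ∈ E ∧ (g v = 0 ∨ v ∈ T)).card ≤ 2)
    (hg'x : g' x ≤ g x + 1) (hg'T : ∀ r ∈ T, g' r = 0) (hg' : ∀ v, v ≠ x → g' v ≤ g v) :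
    HasPathDecomp (E ∪ starEdges x T) k g' := by
  obtain ⟨A, hAT, hcard, hdec⟩ := h.exists_half_star hx hE hgT hN
  have hsum := Finset.card_sdiff_add_card_eq_card hAT
  have hstar : starEdges x A ∪ starEdges x (T \ A) = starEdges x T := by
    rw [starEdges, starEdges, ← Finset.image_union, Finset.union_sdiff_of_subset hAT, starEdges]
  have hstarred := hdec.add_star 2 (T \ A) (fun hh => hx (Finset.mem_sdiff.1 hh).1) ?_ ?_ ?_
  · rw [Finset.union_assoc, hstar] at hstarred
    refine hstarred.mono fun v => ?_
    rw [starShift_self]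
    by_cases hv : v = x
    · subst hv
      rw [if_pos rfl]
      lia
    · by_cases hvA : v ∈ A
      · simp only [hg'T v (hAT hvA), zero_le]
      · rw [if_neg hv, starShift_of_notMem hv hvA]
        exact hg' v hv
  · intro r hr
    obtain ⟨hrT, hrA⟩ := Finset.mem_sdiff.1 hr
    rw [Finset.mem_union, mem_starEdges_self]
    exact fun hh => hh.elim (hE r hrT) hrA
  · rw [starShift_self]
    lia
  · intro r hr
    obtain ⟨hrT, hrA⟩ := Finset.mem_sdiff.1 hr
    have hrx : r ≠ x := fun h => hx (h ▸ hrT)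
    refine (Finset.card_le_card fun v hv => ?_).trans (hz r hrT)
    simp only [mem_zeroNbrs, Finset.mem_filter_univ, Finset.mem_union, mem_starEdges hrx] at hv ⊢
    obtain ⟨hv | hv, h0⟩ := hv
    · have hvx : v ≠ x := fun h => hE r hrT (h ▸ Sym2.eq_swap ▸ hv)
      refine ⟨hv, or_iff_not_imp_right.2 fun hvT => ?_⟩
      rwa [starShift_of_notMem hvx fun hvA => hvT (hAT hvA)] at h0
    · exact absurd hv.2 hrA

omit [Fintype V] in
lemma HasPathDecomp.add_matching [Finite V] (M : Finset (V × V)) (h : HasPathDecomp E k g)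
    (hne : ∀ p ∈ M, p.1 ≠ p.2) (hE : ∀ p ∈ M, s(p.1, p.2) ∉ E) (hg : ∀ p ∈ M, 1 ≤ g p.2)
    (hN : ∀ p ∈ M, ∀ v, s(p.1, v) ∈ E → 1 ≤ g v)
    (hM : ∀ p ∈ M, ∀ q ∈ M, p ≠ q → s(p.1, q.2) ∉ E ∧ p.1 ≠ q.1 ∧ p.1 ≠ q.2 ∧ p.2 ≠ q.2) :
    HasPathDecomp (E ∪ M.image fun p => s(p.1, p.2)) k
      fun v => if v ∈ M.image Prod.snd then g v - 1 else g v := by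
  have := Fintype.ofFinite V
  induction M using Finset.induction_on with
  | empty => simpa using h
  | insert p M hp ih =>
    have hpM (q) (hq : q ∈ M) : s(p.1, q.2) ∉ E ∧ p.1 ≠ q.1 ∧ p.1 ≠ q.2 ∧ p.2 ≠ q.2 :=
      hM p (Finset.mem_insert_self _ _) q (Finset.mem_insert_of_mem hq) fun h => hp (h ▸ hq)
    have hMM : ∀ q ∈ M, ∀ q' ∈ M, q ≠ q' →
        s(q.1, q'.2) ∉ E ∧ q.1 ≠ q'.1 ∧ q.1 ≠ q'.2 ∧ q.2 ≠ q'.2 := fun q hq q' hq' =>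
      hM q (Finset.mem_insert_of_mem hq) q' (Finset.mem_insert_of_mem hq')
    rw [Finset.forall_mem_insert] at hne hE hg hN
    have hp2 : p.2 ∉ M.image Prod.snd := fun h => by
      obtain ⟨q, hq, hqp⟩ := Finset.mem_image.1 h
      exact (hpM q hq).2.2.2 hqp.symm
    have hedge (v) : s(p.1, v) ∉ M.image fun p => s(p.1, p.2) := fun hv => by
      obtain ⟨q, hq, hqv⟩ := Finset.mem_image.1 hv
      rcases Sym2.eq_iff.1 hqv with ⟨h', -⟩ | ⟨-, h'⟩
      · exact (hpM q hq).2.1 h'.symm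
      · exact (hpM q hq).2.2.1 h'.symm
    have hzero : zeroNbrs (E ∪ M.image fun p => s(p.1, p.2))
        (fun v => if v ∈ M.image Prod.snd then g v - 1 else g v) p.1 = ∅ := by
      refine Finset.eq_empty_of_forall_notMem fun v hv => ?_
      rw [mem_zeroNbrs, Finset.mem_union, or_iff_left (hedge v)] at hv
      have hvM : v ∉ M.image Prod.snd := fun h => by
        obtain ⟨q, hq, rfl⟩ := Finset.mem_image.1 h
        exact (hpM q hq).1 hv.1
      exact Nat.ne_of_gt (hN.1 v hv.1) ((if_neg hvM).symm.trans hv.2)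
    rw [Finset.image_insert, Finset.union_insert, Finset.image_insert]
    refine (ih hne.2 hE.2 hg.2 hN.2 hMM).insert_edge hne.1 ?_ ?_ fun v => ?_
    · rw [Finset.mem_union, not_or]
      exact ⟨hE.1, hedge _⟩
    · rw [hzero, if_neg hp2]
      exact hg.1
    · have := hg.1
      grind

end Calculus

/-! ### Prescribing the numbers of path ends -/

section EndPrescription

variable [DecidableEq V] {E : Finset (Sym2 V)} {k : ℕ} {f : V → ℕ} {a b x z : V}

lemma edgeDeg_insert (h : s(a, b) ∉ E) (v : V) :
    edgeDeg (insert s(a, b) E) v = edgeDeg E v + if v = a ∨ v = b then 1 else 0 := by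
  rw [edgeDeg, edgeDeg, Finset.filter_insert]
  simp only [Sym2.mem_iff]
  split_ifs
  · rw [Finset.card_insert_of_notMem fun hmem => h (Finset.mem_filter.1 hmem).1]
  · rfl

variable [Fintype V]

lemma sum_moveEnd (hz : 1 ≤ f z) : ∑ v, moveEnd f x z v = ∑ v, f v := by
  have hadd (v : V) : moveEnd f x z v + (if v = z then 1 else 0) =
      f v + if v = x then 1 else 0 := by
    grind [moveEnd]
  have hsum := Finset.sum_congr rfl fun v (_ : v ∈ Finset.univ) => hadd v
  simpa [Finset.sum_add_distrib] using hsum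

/-- `f` distributes the `2 * k` ends of `k` paths over the vertices, in accordance with the
parities of the degrees in the loopless edge set `E`. -/
structure IsEndPrescription (E : Finset (Sym2 V)) (k : ℕ) (f : V → ℕ) : Prop where
  loopless : ∀ v, s(v, v) ∉ E
  mod_two : ∀ v, f v % 2 = edgeDeg E v % 2
  sum_eq : ∑ v, f v = 2 * k

lemma IsEndPrescription.hasPathDecomp_empty (h : IsEndPrescription ∅ k f) :
    HasPathDecomp ∅ k f := by
  have hf (v : V) : 2 * (f v / 2) = f v := by
    have := h.mod_two v
    simp only [edgeDeg, Finset.filter_empty, Finset.card_empty] at this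
    lia
  set D : Multiset (List V) := Finset.univ.val.bind fun v : V => .replicate (f v / 2) [v]
  have hD : ∀ P ∈ D, ∃ v, P = [v] := fun P hP => by
    obtain ⟨v, -, hv⟩ := Multiset.mem_bind.1 hP
    exact ⟨v, Multiset.eq_of_mem_replicate hv⟩
  have hcount (u v : V) : ((Multiset.replicate (f u / 2) [u]).bind pathEnds).count v =
      if v = u then f u else 0 := by
    rw [Multiset.count_bind, Multiset.map_replicate, Multiset.sum_replicate, smul_eq_mul]
    split_ifs with hvu
    · rw [← hf u, hvu, mul_comm]
      simp [pathEnds]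
    · simp [pathEnds, hvu]
  refine ⟨D, ⟨fun P hP => ?_, fun P hP => ?_, ?_⟩, ?_, fun v => ?_⟩
  · obtain ⟨v, rfl⟩ := hD P hP
    exact List.cons_ne_nil _ _
  · obtain ⟨v, rfl⟩ := hD P hP
    exact List.nodup_singleton v
  · rw [Finset.empty_val, Multiset.eq_zero_iff_forall_notMem]
    intro e he
    obtain ⟨P, hP, heP⟩ := Multiset.mem_bind.1 he
    obtain ⟨v, rfl⟩ := hD P hP
    exact Multiset.notMem_zero e heP
  · have hcard : D.card = ∑ v, f v / 2 := by
      simp only [D, Multiset.card_bind, Function.comp_def, Multiset.card_replicate]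
      rfl
    have htwo : 2 * ∑ v, f v / 2 = 2 * k := by
      rw [Finset.mul_sum, ← h.sum_eq]
      exact Finset.sum_congr rfl fun v _ => hf v
    lia
  · have hv : endCount D v = ∑ u, if v = u then f u else 0 := by
      simp only [endCount, D, Multiset.bind_assoc, Multiset.count_bind, hcount]
      rfl
    rw [hv, Finset.sum_ite_eq, if_pos (Finset.mem_univ v)]

lemma IsEndPrescription.erase (h : IsEndPrescription E k f) (hzx : s(z, x) ∈ E) (hz : 1 ≤ f z) :
    IsEndPrescription (E.erase s(z, x)) k (moveEnd f x z) where
  loopless v hv := h.loopless v (Finset.mem_of_mem_erase hv)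
  mod_two v := by
    have hne : z ≠ x := fun hzx' => h.loopless x (hzx' ▸ hzx)
    have hdeg := edgeDeg_insert (Finset.notMem_erase s(z, x) E) v
    rw [Finset.insert_erase hzx] at hdeg
    have := h.mod_two v
    rw [moveEnd]
    split_ifs at hdeg ⊢ <;> grind
  sum_eq := by
    rw [sum_moveEnd hz, h.sum_eq]

omit [Fintype V] in
lemma HasPathDecomp.of_erase [Finite V] (h : HasPathDecomp (E.erase s(z, x)) k (moveEnd f x z))
    (hzx : s(z, x) ∈ E) (hloop : ∀ v, s(v, v) ∉ E)
    (hpos : ∀ v, s(z, v) ∈ E → v ≠ x → 1 ≤ f v) : HasPathDecomp E k f := by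
  have := Fintype.ofFinite V
  have hne : z ≠ x := fun hzx' => hloop x (hzx' ▸ hzx)
  have hzero : zeroNbrs (E.erase s(z, x)) (moveEnd f x z) z = ∅ := by
    refine Finset.eq_empty_of_forall_notMem fun v hv => ?_
    obtain ⟨hzv, h0⟩ := mem_zeroNbrs.1 hv
    obtain ⟨hvx, hzv⟩ := Finset.mem_erase.1 hzv
    have hvx : v ≠ x := fun h => hvx (h ▸ rfl)
    have hvz : v ≠ z := fun h => hloop z (h ▸ hzv)
    have := hpos v hzv hvx
    grind [moveEnd]
  rw [← Finset.insert_erase hzx]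
  refine h.insert_edge hne (Finset.notMem_erase _ _) ?_ fun v => ?_
  · rw [hzero, Finset.card_empty, moveEnd, if_pos rfl, if_neg hne.symm]
    lia
  · grind [moveEnd]

theorem IsEndPrescription.hasPathDecomp (h : IsEndPrescription E k f)
    (hzero : {v | f v = 0 ∧ ∃ w, s(v, w) ∈ E}.Subsingleton) : HasPathDecomp E k f := by
  induction hn : E.card generalizing E f with
  | zero =>
    obtain rfl := Finset.card_eq_zero.1 hn
    exact h.hasPathDecomp_empty
  | succ n ih =>
    obtain ⟨x, z, hxz, hpos⟩ : ∃ x z, s(x, z) ∈ E ∧ ∀ v w, s(v, w) ∈ E → v ≠ x → 1 ≤ f v := by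
      by_cases hx : ∃ x, f x = 0 ∧ ∃ w, s(x, w) ∈ E
      · obtain ⟨x, hx0, z, hxz⟩ := hx
        exact ⟨x, z, hxz, fun v w hvw hvx => Nat.one_le_iff_ne_zero.2 fun hv0 =>
          hvx (hzero ⟨hv0, w, hvw⟩ ⟨hx0, z, hxz⟩)⟩
      · obtain ⟨e, hxz⟩ := Finset.card_pos.1 (n.succ_pos.trans_eq hn.symm)
        induction e with | _ x z
        exact ⟨x, z, hxz, fun v w hvw _ => Nat.one_le_iff_ne_zero.2 fun hv0 =>
          hx ⟨v, hv0, w, hvw⟩⟩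
    have hzx : s(z, x) ∈ E := Sym2.eq_swap ▸ hxz
    have hne : z ≠ x := fun hzx' => h.loopless x (hzx' ▸ hzx)
    have hz := hpos z x hzx hne
    -- After moving an end from `z` to `x`, the only vertex that can lack path ends is `z`.
    have honly (v : V) (hv : moveEnd f x z v = 0 ∧ ∃ w, s(v, w) ∈ E.erase s(z, x)) : v = z := by
      obtain ⟨hv0, w, hvw⟩ := hv
      have := hpos v w (Finset.mem_of_mem_erase hvw)
      grind [moveEnd]
    have hcard : (E.erase s(z, x)).card = n := by
      rw [Finset.card_erase_of_mem hzx, hn, Nat.add_sub_cancel]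
    refine (ih (h.erase hzx hz) (fun u hu v hv => (honly u hu).trans (honly v hv).symm)
      hcard).of_erase hzx h.loopless fun v hzv hvx => ?_
    exact hpos v z (Sym2.eq_swap ▸ hzv) hvx

end EndPrescription

/-! ### Even vertices and admissible edge sets -/

section Parity

variable [DecidableEq V] {E F : Finset (Sym2 V)} {k : ℕ} {v w : V}

/-- The parity of the degree of `v` in `E`. -/
def parity (E : Finset (Sym2 V)) (v : V) : ℕ := edgeDeg E v % 2

lemma parity_eq_zero_or_one (E : Finset (Sym2 V)) (v : V) : parity E v = 0 ∨ parity E v = 1 :=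
  Nat.mod_two_eq_zero_or_one _

lemma HasPathDecomp.parity {g : V → ℕ} (h : HasPathDecomp E k g) :
    HasPathDecomp E k (parity E) := by
  obtain ⟨D, hD, hk, -⟩ := h
  refine ⟨D, hD, hk, fun v => ?_⟩
  have := Nat.even_iff.1 (hD.even_edgeDeg_add_endCount v)
  rw [_root_.parity]
  lia

lemma edgeDeg_union (h : Disjoint E F) (v : V) :
    edgeDeg (E ∪ F) v = edgeDeg E v + edgeDeg F v := by
  rw [edgeDeg, Finset.filter_union, Finset.card_union_of_disjoint]
  · rfl
  · exact Finset.disjoint_filter_filter h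

lemma edgeDeg_sdiff_add (h : F ⊆ E) (v : V) :
    edgeDeg (E \ F) v + edgeDeg F v = edgeDeg E v := by
  rw [← edgeDeg_union Finset.sdiff_disjoint, Finset.sdiff_union_of_subset h]

lemma edgeDeg_eq_zero (h : ∀ w, s(v, w) ∉ F) : edgeDeg F v = 0 := by
  refine Finset.card_eq_zero.2 (Finset.filter_eq_empty_iff.2 fun e he hv => ?_)
  obtain ⟨w, rfl⟩ := hv
  exact h w he

lemma edgeDeg_singleton (a b v : V) : edgeDeg {s(a, b)} v = if v = a ∨ v = b then 1 else 0 := by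
  rw [← insert_empty_eq, edgeDeg_insert (Finset.notMem_empty _),
    edgeDeg_eq_zero fun _ => Finset.notMem_empty _, zero_add]

lemma edgeDeg_starEdges {x : V} {B : Finset V} (hx : x ∉ B) (v : V) :
    edgeDeg (starEdges x B) v = if v = x then B.card else if v ∈ B then 1 else 0 := by
  induction B using Finset.induction_on with
  | empty => simp [starEdges, edgeDeg]
  | insert b B hb ih =>
    rw [Finset.mem_insert, not_or] at hx
    rw [starEdges_insert, edgeDeg_insert (by rwa [mem_starEdges_self]), ih hx.2,
      Finset.card_insert_of_notMem hb]
    grind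

lemma parity_sdiff (h : F ⊆ E) (v : V) :
    parity (E \ F) v = (parity E v + edgeDeg F v) % 2 := by
  have := edgeDeg_sdiff_add h v
  rw [parity, parity]
  lia

lemma parity_sdiff_of_notMem (hF : F ⊆ E) (h : ∀ w, s(v, w) ∉ F) :
    parity (E \ F) v = parity E v := by
  rw [parity_sdiff hF, edgeDeg_eq_zero h, add_zero, parity, Nat.mod_mod]

variable [Fintype V]

/-- The neighbours of `v` in `E` of even degree. -/
def evenNbrs (E : Finset (Sym2 V)) (v : V) : Finset V := zeroNbrs E (parity E) v

lemma mem_evenNbrs : w ∈ evenNbrs E v ↔ s(v, w) ∈ E ∧ parity E w = 0 := mem_zeroNbrs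

lemma mem_evenNbrs_comm (hv : parity E v = 0) (h : w ∈ evenNbrs E v) : v ∈ evenNbrs E w :=
  mem_evenNbrs.2 ⟨Sym2.eq_swap ▸ (mem_evenNbrs.1 h).1, hv⟩

/-- `W` is a union of components of `E` whose even vertices form a triangle `T`, and whose odd
vertices have at least two even neighbours. -/
structure IsSETOn (E : Finset (Sym2 V)) (W : Set V) (T : Finset V) : Prop where
  card : T.card = 3
  subset : ∀ v ∈ T, v ∈ W
  adj : ∀ u ∈ T, ∀ v ∈ T, u ≠ v → s(u, v) ∈ E
  parity_iff : ∀ v ∈ W, parity E v = 0 ↔ v ∈ T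
  closed : ∀ v ∈ W, ∀ w, s(v, w) ∈ E → w ∈ W
  two_le : ∀ v ∈ W, parity E v = 1 → 2 ≤ (evenNbrs E v).card

/-- The edge sets to which the induction applies: even vertices have at most three even
neighbours, and no union of components is of SET type. -/
structure Admissible (E : Finset (Sym2 V)) : Prop where
  loopless : ∀ v, s(v, v) ∉ E
  card_le : ∀ v, parity E v = 0 → (evenNbrs E v).card ≤ 3
  not_set : ∀ W T, ¬ IsSETOn E W T

/-- The induction hypothesis: every admissible proper subset of `E` decomposes into at most `k`
paths. -/
def HasPathDecompBelow (E : Finset (Sym2 V)) (k : ℕ) : Prop :=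
  ∀ H ⊂ E, Admissible H → HasPathDecomp H k 0

lemma HasPathDecompBelow.sdiff (h : HasPathDecompBelow E k) (hF : F ⊆ E) (hne : F.Nonempty)
    (hadm : Admissible (E \ F)) : HasPathDecomp (E \ F) k (parity (E \ F)) :=
  (h _ (Finset.sdiff_ssubset hF hne) hadm).parity

lemma Admissible.notMem_evenNbrs_self (hE : Admissible E) (v : V) : v ∉ evenNbrs E v :=
  fun h => hE.loopless v (mem_evenNbrs.1 h).1

lemma Admissible.card_evenNbrs_sdiff_le (hE : Admissible E) (hF : F ⊆ E)
    (h : ∀ v w, s(v, w) ∈ F → parity (E \ F) v = 0 → evenNbrs (E \ F) v = ∅) (v : V)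
    (hv : parity (E \ F) v = 0) : (evenNbrs (E \ F) v).card ≤ 3 := by
  by_cases ht : ∃ w, s(v, w) ∈ F
  · obtain ⟨w, hw⟩ := ht
    rw [h v w hw hv, Finset.card_empty]
    exact Nat.zero_le 3
  · push Not at ht
    have hsub : evenNbrs (E \ F) v ⊆ evenNbrs E v := fun w hw => by
      obtain ⟨hvw, hw0⟩ := mem_evenNbrs.1 hw
      have hwF (u) : s(w, u) ∉ F := fun hu =>
        Finset.ne_empty_of_mem (mem_evenNbrs_comm hv hw) (h w u hu hw0)
      rw [mem_evenNbrs, ← parity_sdiff_of_notMem hF hwF]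
      exact ⟨(Finset.mem_sdiff.1 hvw).1, hw0⟩
    refine (Finset.card_le_card hsub).trans (hE.card_le v ?_)
    rwa [← parity_sdiff_of_notMem hF ht]

lemma IsSETOn.of_sdiff (hF : F ⊆ E) {W : Set V} {T : Finset V} (h : IsSETOn (E \ F) W T)
    (hW : ∀ v ∈ W, ∀ w, s(v, w) ∉ F) : IsSETOn E W T := by
  have hparity (v) (hv : v ∈ W) : parity (E \ F) v = parity E v :=
    parity_sdiff_of_notMem hF (hW v hv)
  have hsub {e} (he : e ∈ E \ F) : e ∈ E := (Finset.mem_sdiff.1 he).1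
  refine ⟨h.card, h.subset, fun u hu v hv huv => hsub (h.adj u hu v hv huv), fun v hv => ?_,
    fun v hv w hw => h.closed v hv w (Finset.mem_sdiff.2 ⟨hw, hW v hv w⟩), fun v hv h1 => ?_⟩
  · rw [← hparity v hv]
    exact h.parity_iff v hv
  · refine (h.two_le v hv (by rw [hparity v hv, h1])).trans (Finset.card_le_card fun w hw => ?_)
    obtain ⟨hvw, hw0⟩ := mem_evenNbrs.1 hw
    rw [mem_evenNbrs, ← hparity w (h.closed v hv w hvw)]
    exact ⟨hsub hvw, hw0⟩

theorem Admissible.sdiff (hE : Admissible E) (hF : F ⊆ E)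
    (h : ∀ v w, s(v, w) ∈ F → (evenNbrs (E \ F) v).card ≤ 1 ∧
      (parity (E \ F) v = 0 → evenNbrs (E \ F) v = ∅)) : Admissible (E \ F) := by
  refine ⟨fun v hv => hE.loopless v (Finset.mem_sdiff.1 hv).1,
    hE.card_evenNbrs_sdiff_le hF fun v w hw => (h v w hw).2, fun W T hS => ?_⟩
  refine hE.not_set W T (hS.of_sdiff hF fun v hv w hw => ?_)
  obtain ⟨hle, hempty⟩ := h v w hw
  rcases parity_eq_zero_or_one (E \ F) v with h0 | h1
  · have hvT := (hS.parity_iff v hv).1 h0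
    obtain ⟨u, hu, huv⟩ := Finset.exists_mem_ne (by rw [hS.card]; norm_num) v
    exact Finset.ne_empty_of_mem (mem_evenNbrs.2
      ⟨hS.adj v hvT u hu huv.symm, (hS.parity_iff u (hS.subset u hu)).2 hu⟩) (hempty h0)
  · exact absurd ((hS.two_le v hv h1).trans hle) (by norm_num)

end Parity

/-! ### Making even vertices odd -/

section Flip

variable [DecidableEq V] {E F : Finset (Sym2 V)} {X : Finset V} {k : ℕ} {v : V}

/-- Removing `F` from `E` makes all vertices of `X` odd, and `F` has no edges outside `X`. -/
structure IsFlip (E F : Finset (Sym2 V)) (X : Finset V) : Prop where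
  subset : F ⊆ E
  parity_eq_zero : ∀ v ∈ X, parity E v = 0
  odd_edgeDeg : ∀ v ∈ X, edgeDeg F v % 2 = 1
  mem : ∀ v w, s(v, w) ∈ F → v ∈ X

lemma IsFlip.parity_of_mem (h : IsFlip E F X) (hv : v ∈ X) : parity (E \ F) v = 1 := by
  have := h.odd_edgeDeg v hv
  rw [parity_sdiff h.subset, h.parity_eq_zero v hv]
  lia

lemma IsFlip.parity_of_notMem (h : IsFlip E F X) (hv : v ∉ X) :
    parity (E \ F) v = parity E v :=
  parity_sdiff_of_notMem h.subset fun w hw => hv (h.mem v w hw)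

variable [Fintype V]

lemma IsFlip.evenNbrs_sdiff (h : IsFlip E F X) (v : V) :
    evenNbrs (E \ F) v = evenNbrs E v \ X := by
  ext w
  rw [mem_evenNbrs, Finset.mem_sdiff, Finset.mem_sdiff, mem_evenNbrs]
  by_cases hw : w ∈ X
  · simp [hw, h.parity_of_mem hw]
  · have hF : s(v, w) ∉ F := fun hF => hw (h.mem w v (Sym2.eq_swap ▸ hF))
    simp [hw, h.parity_of_notMem hw, hF]

theorem IsFlip.admissible (h : IsFlip E F X) (hE : Admissible E)
    (hX : ∀ v ∈ X, (evenNbrs E v \ X).card ≤ 1) : Admissible (E \ F) := by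
  refine hE.sdiff h.subset fun v w hvw => ⟨?_, fun h0 => ?_⟩
  · rw [h.evenNbrs_sdiff]
    exact hX v (h.mem v w hvw)
  · have := h.parity_of_mem (h.mem v w hvw)
    lia

omit [Fintype V] in
lemma card_sdiff_le_of_subset_inter {s t u : Finset V} {m n : ℕ} (hs : s.card ≤ m + n)
    (hsu : u ⊆ s) (htu : u ⊆ t) (hu : n ≤ u.card) : (s \ t).card ≤ m := by
  have h := Finset.card_le_card (Finset.sdiff_subset_sdiff (Finset.Subset.refl s) htu)
  rw [Finset.card_sdiff_of_subset hsu] at h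
  lia

theorem IsFlip.admissible_of_card_le_two (h : IsFlip E F X) (hE : Admissible E)
    (hcard : ∀ v, parity E v = 0 → (evenNbrs E v).card ≤ 2) : Admissible (E \ F) := by
  refine h.admissible hE fun v hv => ?_
  have hne : edgeDeg F v ≠ 0 := fun h0 => by
    have := h.odd_edgeDeg v hv
    lia
  obtain ⟨w, hw⟩ := not_forall_not.1 (mt edgeDeg_eq_zero hne)
  have hwX : w ∈ X := h.mem w v (Sym2.eq_swap ▸ hw)
  exact card_sdiff_le_of_subset_inter (hcard v (h.parity_eq_zero v hv)) (u := {w})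
    (Finset.singleton_subset_iff.2 (mem_evenNbrs.2 ⟨h.subset hw, h.parity_eq_zero w hwX⟩))
    (Finset.singleton_subset_iff.2 hwX) le_rfl

lemma isFlip_singleton {x y : V} (hx : parity E x = 0) (hy : y ∈ evenNbrs E x) :
    IsFlip E {s(x, y)} {x, y} where
  subset := Finset.singleton_subset_iff.2 (mem_evenNbrs.1 hy).1
  parity_eq_zero v hv := by grind [mem_evenNbrs]
  odd_edgeDeg v hv := by grind [edgeDeg_singleton]
  mem v w hvw := by grind [Sym2.eq_iff]

theorem hasPathDecomp_of_evenNbrs_eq_singleton {x y : V} (hE : Admissible E)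
    (ih : HasPathDecompBelow E k) (hcard : ∀ v, parity E v = 0 → (evenNbrs E v).card ≤ 2)
    (hx : parity E x = 0) (hN : evenNbrs E x = {y}) : HasPathDecomp E k 0 := by
  have hy : y ∈ evenNbrs E x := by simp [hN]
  have hxyE := (mem_evenNbrs.1 hy).1
  have hxy : x ≠ y := fun h => hE.loopless y (h ▸ hxyE)
  have hflip := isFlip_singleton hx hy
  have hx1 : evenNbrs (E \ {s(x, y)}) x = ∅ := by
    rw [hflip.evenNbrs_sdiff, hN, Finset.sdiff_eq_empty_iff_subset]
    exact Finset.subset_insert _ _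
  have hadm := hflip.admissible_of_card_le_two hE hcard
  have hlt : (evenNbrs (E \ {s(x, y)}) x).card < parity (E \ {s(x, y)}) y := by
    rw [hx1, hflip.parity_of_mem (by simp)]
    exact Nat.zero_lt_one
  have h := (ih.sdiff hflip.subset (Finset.singleton_nonempty _) hadm).insert_edge_zero hxy
    (by simp) hlt
  rwa [Finset.sdiff_singleton_eq_erase, Finset.insert_erase hxyE] at h

lemma isFlip_pair {s s' v t : V} (hE : Admissible E) (hs : parity E s = 0) (hv : parity E v = 0)
    (hNs : evenNbrs E s = {s', v}) (hNv : evenNbrs E v = {s, t}) (hst : s ≠ t) (hsv : s' ≠ v)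
    (hne : s' ≠ t) : IsFlip E {s(v, t), s(s, s')} {s, s', v, t} := by
  have hs' : s(s, s') ∈ E ∧ parity E s' = 0 := mem_evenNbrs.1 (by simp [hNs])
  have ht : s(v, t) ∈ E ∧ parity E t = 0 := mem_evenNbrs.1 (by simp [hNv])
  have hvs : v ≠ s := fun h => hE.notMem_evenNbrs_self v (by rw [hNv, h]; simp)
  have hedges : s(v, t) ∉ ({s(s, s')} : Finset (Sym2 V)) := by
    simp [hvs, hsv.symm]
  refine ⟨by grind, by grind, fun u hu => ?_, by grind [Sym2.eq_iff]⟩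
  rw [edgeDeg_insert hedges, edgeDeg_singleton]
  grind

theorem hasPathDecomp_of_evenNbrs_eq_pairs {s s' v t : V} (hE : Admissible E)
    (ih : HasPathDecompBelow E k) (hcard : ∀ v, parity E v = 0 → (evenNbrs E v).card ≤ 2)
    (hs : parity E s = 0) (hv : parity E v = 0) (hNs : evenNbrs E s = {s', v})
    (hNv : evenNbrs E v = {s, t}) (hst : s ≠ t) (hsv : s' ≠ v) (hne : s' ≠ t) :
    HasPathDecomp E k 0 := by
  have hflip := isFlip_pair hE hs hv hNs hNv hst hsv hne
  set F : Finset (Sym2 V) := {s(v, t), s(s, s')} with hF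
  have hs' : s' ∈ evenNbrs E s := by simp [hNs]
  have ht : t ∈ evenNbrs E v := by simp [hNv]
  have hss' : s ≠ s' := fun h => hE.notMem_evenNbrs_self s (h ▸ hs')
  have hvt : v ≠ t := fun h => hE.notMem_evenNbrs_self v (h ▸ ht)
  have hvs : v ≠ s := fun h => hE.notMem_evenNbrs_self v (by rw [hNv, h]; simp)
  have hs0 : evenNbrs (E \ F) s = ∅ := by
    rw [hflip.evenNbrs_sdiff, hNs]
    grind
  have hv0 : evenNbrs (E \ F) v = ∅ := by
    rw [hflip.evenNbrs_sdiff, hNv]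
    grind
  have hadm := hflip.admissible_of_card_le_two hE hcard
  have hdec : HasPathDecomp (insert s(s, s') (E \ F)) k
      fun u => if u = s' then 0 else parity (E \ F) u := by
    have hs'1 : parity (E \ F) s' = 1 := hflip.parity_of_mem (by simp)
    refine (ih.sdiff hflip.subset (by simp [hF]) hadm).insert_edge hss' (by simp [hF]) ?_
      fun u => by grind
    change (evenNbrs (E \ F) s).card < _
    simp [hs0, hs'1]
  have hzero : zeroNbrs (insert s(s, s') (E \ F)) (fun u => if u = s' then 0 else parity (E \ F) u)
      v = ∅ := by
    refine Finset.eq_empty_of_forall_notMem fun u hu => ?_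
    have hu0 : u ∉ evenNbrs (E \ F) v := by simp [hv0]
    have hs'v : s' ∉ evenNbrs E v := by simp [hNv, hss'.symm, hne]
    have hs'0 := (mem_evenNbrs.1 hs').2
    rw [mem_evenNbrs] at hu0 hs'v
    rw [mem_zeroNbrs] at hu
    grind
  have hdecE := hdec.insert_edge_zero hvt (by simp [hF, hvs, hsv.symm]) (by
    rw [hzero, if_neg hne.symm, hflip.parity_of_mem (by simp)]
    exact Nat.zero_lt_one)
  rwa [show insert s(v, t) (insert s(s, s') (E \ F)) = E by
    have := Finset.sdiff_union_of_subset hflip.subset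
    grind] at hdecE

end Flip

/-! ### Even vertices with three even neighbours -/

section EvenStar

variable [DecidableEq V] [Fintype V] {E F : Finset (Sym2 V)} {X T : Finset V} {k : ℕ} {x r p : V}

lemma isFlip_starEdges_evenNbrs (hE : Admissible E) (hx : parity E x = 0)
    (hN : (evenNbrs E x).card = 3) :
    IsFlip E (starEdges x (evenNbrs E x)) (insert x (evenNbrs E x)) where
  subset := Finset.image_subset_iff.2 fun _ hw => (mem_evenNbrs.1 hw).1
  parity_eq_zero := Finset.forall_mem_insert _ _ _ |>.2 ⟨hx, fun _ hw => (mem_evenNbrs.1 hw).2⟩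
  odd_edgeDeg v hv := by
    rw [edgeDeg_starEdges (hE.notMem_evenNbrs_self x)]
    grind
  mem v w hvw := by
    rcases eq_or_ne v x with rfl | hv
    · exact Finset.mem_insert_self _ _
    · exact Finset.mem_insert_of_mem ((mem_starEdges hv).1 hvw).2

theorem hasPathDecomp_of_admissible_sdiff_starEdges (hE : Admissible E)
    (ih : HasPathDecompBelow E k) (hx : parity E x = 0) (hN : (evenNbrs E x).card = 3)
    (hadm : Admissible (E \ starEdges x (evenNbrs E x))) : HasPathDecomp E k 0 := by
  have hflip := isFlip_starEdges_evenNbrs hE hx hN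
  have hxN := hE.notMem_evenNbrs_self x
  set F := starEdges x (evenNbrs E x) with hF
  have hne : F.Nonempty := (Finset.card_pos.1 (hN ▸ Nat.zero_lt_succ 2)).image _
  have hone (v) (hv : v ∈ insert x (evenNbrs E x)) : 1 ≤ parity (E \ F) v :=
    (hflip.parity_of_mem hv).ge
  rw [← Finset.sdiff_union_of_subset hflip.subset]
  refine (ih.sdiff hflip.subset hne hadm).add_three hN hxN (fun r hr h => ?_)
    (hone x (Finset.mem_insert_self _ _)) (fun r hr => hone r (Finset.mem_insert_of_mem hr))
    (fun v hv => ?_) (fun r hr => ?_) (Nat.zero_le _) (fun _ _ => rfl) fun _ _ => Nat.zero_le _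
  · exact (Finset.mem_sdiff.1 h).2 (mem_starEdges_self.2 hr)
  · refine Nat.one_le_iff_ne_zero.2 fun h0 => ?_
    have hv' : v ∈ evenNbrs (E \ F) x := mem_evenNbrs.2 ⟨hv, h0⟩
    rw [hflip.evenNbrs_sdiff] at hv'
    exact (Finset.mem_sdiff.1 hv').2 (Finset.mem_insert_of_mem (Finset.mem_sdiff.1 hv').1)
  · have hsub : (Finset.univ.filter fun v =>
        s(r, v) ∈ E \ F ∧ (parity (E \ F) v = 0 ∨ v ∈ evenNbrs E x)) ⊆ (evenNbrs E r).erase x := by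
      intro v hv
      obtain ⟨-, hrv, hv⟩ := Finset.mem_filter.1 hv
      obtain ⟨hrvE, hrvF⟩ := Finset.mem_sdiff.1 hrv
      refine Finset.mem_erase.2 ⟨?_, hv.elim (fun h0 => ?_) fun hv => ?_⟩
      · rintro rfl
        exact hrvF (Sym2.eq_swap ▸ mem_starEdges_self.2 hr)
      · have hv' : v ∈ evenNbrs (E \ F) r := mem_evenNbrs.2 ⟨hrv, h0⟩
        rw [hflip.evenNbrs_sdiff] at hv'
        exact (Finset.mem_sdiff.1 hv').1
      · exact mem_evenNbrs.2 ⟨hrvE, (mem_evenNbrs.1 hv).2⟩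
    refine (Finset.card_le_card hsub).trans ?_
    rw [Finset.card_erase_of_mem (mem_evenNbrs_comm hx hr)]
    exact Nat.sub_le_of_le_add (hE.card_le r (mem_evenNbrs.1 hr).2)

lemma IsSETOn.parity_eq_zero {W : Set V} (h : IsSETOn E W T) {v : V}
    (hv : v ∈ T) : parity E v = 0 :=
  (h.parity_iff v (h.subset v hv)).2 hv

/-- `T` is a triangle of even vertices and `r` is an even vertex outside `T` with at least two
neighbours in `T`. -/
structure IsEvenTrianglePlus (E : Finset (Sym2 V)) (T : Finset V) (r : V) : Prop where
  card : T.card = 3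
  adj : ∀ u ∈ T, ∀ v ∈ T, u ≠ v → v ∈ evenNbrs E u
  parity_eq_zero : parity E r = 0
  notMem : r ∉ T
  two_le : 2 ≤ (evenNbrs E r ∩ T).card

theorem IsFlip.exists_isEvenTrianglePlus (h : IsFlip E F X) (hE : Admissible E)
    (hadm : ¬ Admissible (E \ F)) : ∃ T r, IsEvenTrianglePlus E T r := by
  obtain ⟨W, T, hS⟩ : ∃ W T, IsSETOn (E \ F) W T := by
    by_contra! hnot
    refine hadm ⟨fun v hv => hE.loopless v (Finset.mem_sdiff.1 hv).1,
      hE.card_evenNbrs_sdiff_le h.subset fun v w hvw h0 => ?_, hnot⟩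
    have := h.parity_of_mem (h.mem v w hvw)
    lia
  obtain ⟨r, hrW, w, hrw⟩ : ∃ r ∈ W, ∃ w, s(r, w) ∈ F := by
    by_contra! htouch
    exact hE.not_set W T (hS.of_sdiff h.subset htouch)
  have hr : r ∈ X := h.mem r w hrw
  have hr1 := h.parity_of_mem hr
  have hsub (v) : evenNbrs (E \ F) v ⊆ evenNbrs E v :=
    h.evenNbrs_sdiff v ▸ Finset.sdiff_subset
  refine ⟨T, r, hS.card, fun u hu v hv huv =>
    hsub u (mem_evenNbrs.2 ⟨hS.adj u hu v hv huv, hS.parity_eq_zero hv⟩), h.parity_eq_zero r hr,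
    fun hrT => ?_, (hS.two_le r hrW hr1).trans (Finset.card_le_card fun v hv => ?_)⟩
  · have := hS.parity_eq_zero hrT
    lia
  · obtain ⟨hrv, hv0⟩ := mem_evenNbrs.1 hv
    exact Finset.mem_inter.2 ⟨hsub r hv, (hS.parity_iff v (hS.closed r hrW v hrv)).1 hv0⟩

lemma IsEvenTrianglePlus.evenNbrs_eq (h : IsEvenTrianglePlus E T r) (hE : Admissible E)
    (hp : p ∈ evenNbrs E r ∩ T) : evenNbrs E p = insert r (T.erase p) := by
  obtain ⟨hrp, hpT⟩ := Finset.mem_inter.1 hp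
  refine (Finset.eq_of_subset_of_card_le (Finset.insert_subset
    (mem_evenNbrs_comm h.parity_eq_zero hrp) fun v hv => ?_) ?_).symm
  · obtain ⟨hvp, hv⟩ := Finset.mem_erase.1 hv
    exact h.adj p hpT v hv hvp.symm
  · rw [Finset.card_insert_of_notMem fun hr => h.notMem (Finset.mem_of_mem_erase hr),
      Finset.card_erase_of_mem hpT, h.card]
    exact hE.card_le p (mem_evenNbrs.1 hrp).2

lemma IsEvenTrianglePlus.card_evenNbrs_sdiff_le (h : IsEvenTrianglePlus E T r) (hE : Admissible E)
    {v : V} (hv : v ∈ insert r T) : (evenNbrs E v \ insert r T).card ≤ 1 := by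
  rcases Finset.mem_insert.1 hv with rfl | hv
  · exact card_sdiff_le_of_subset_inter (hE.card_le v h.parity_eq_zero) Finset.inter_subset_left
      (Finset.inter_subset_right.trans (Finset.subset_insert _ _)) h.two_le
  · obtain ⟨u, hu, huv⟩ := Finset.exists_mem_ne (by rw [h.card]; norm_num) v
    refine card_sdiff_le_of_subset_inter (hE.card_le v (mem_evenNbrs.1 (h.adj u hu v hv huv)).2)
      (n := 2) (u := T.erase v) (fun w hw => ?_)
      ((Finset.erase_subset _ _).trans (Finset.subset_insert _ _)) ?_
    · exact h.adj v hv w (Finset.mem_of_mem_erase hw) (Finset.ne_of_mem_erase hw).symm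
    · rw [Finset.card_erase_of_mem hv, h.card]

theorem hasPathDecomp_of_card_evenNbrs_eq_three (hE : Admissible E) (ih : HasPathDecompBelow E k)
    (hx : parity E x = 0) (hN : (evenNbrs E x).card = 3) : HasPathDecomp E k 0 := by
  by_cases hadm : Admissible (E \ starEdges x (evenNbrs E x))
  · exact hasPathDecomp_of_admissible_sdiff_starEdges hE ih hx hN hadm
  -- Otherwise the star may be replaced by the star at a vertex `p` of the obstructing triangle.
  obtain ⟨T, r, hT⟩ := (isFlip_starEdges_evenNbrs hE hx hN).exists_isEvenTrianglePlus hE hadm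
  obtain ⟨p, hp⟩ := Finset.card_pos.1 (Nat.zero_lt_two.trans_le hT.two_le)
  obtain ⟨hrp, hpT⟩ := Finset.mem_inter.1 hp
  have hNp := hT.evenNbrs_eq hE hp
  have hp0 := (mem_evenNbrs.1 hrp).2
  have hNp3 : (evenNbrs E p).card = 3 := by
    rw [hNp, Finset.card_insert_of_notMem fun hr => hT.notMem (Finset.mem_of_mem_erase hr),
      Finset.card_erase_of_mem hpT, hT.card]
  have hX : insert p (evenNbrs E p) = insert r T := by
    rw [hNp, Finset.insert_comm, Finset.insert_erase hpT]
  refine hasPathDecomp_of_admissible_sdiff_starEdges hE ih hp0 hNp3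
    ((isFlip_starEdges_evenNbrs hE hp0 hNp3).admissible hE fun v hv => ?_)
  rw [hX] at hv ⊢
  exact hT.card_evenNbrs_sdiff_le hE hv

end EvenStar

/-! ### Odd vertices with even neighbours -/

section Triangular

variable [DecidableEq V] {E F : Finset (Sym2 V)} {k : ℕ} {v w : V}

lemma edgeDeg_eq_one (h : s(v, w) ∈ F) (hw : ∀ u, s(v, u) ∈ F → u = w) : edgeDeg F v = 1 := by
  refine Finset.card_eq_one.2 ⟨s(v, w), Finset.eq_singleton_iff_unique_mem.2
    ⟨by simp [h], fun e he => ?_⟩⟩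
  obtain ⟨heF, u, rfl⟩ := Finset.mem_filter.1 he
  rw [hw u heF]

variable [Fintype V]

/-- An even vertex together with its even neighbours; the class of `v` in a disjoint union of
triangles. -/
def evenClosedNbhd (E : Finset (Sym2 V)) (v : V) : Finset V := insert v (evenNbrs E v)

/-- The graph on the even vertices is a disjoint union of isolated vertices and triangles. -/
structure IsTriangular (E : Finset (Sym2 V)) : Prop where
  card : ∀ v, parity E v = 0 → evenNbrs E v = ∅ ∨ (evenNbrs E v).card = 2
  evenClosedNbhd_eq : ∀ v, parity E v = 0 → ∀ w ∈ evenNbrs E v,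
    evenClosedNbhd E w = evenClosedNbhd E v

lemma IsTriangular.card_le (hT : IsTriangular E) (hv : parity E v = 0) :
    (evenNbrs E v).card ≤ 2 := by
  rcases hT.card v hv with h | h <;> simp [h]

theorem hasPathDecomp_or_isTriangular (hE : Admissible E) (ih : HasPathDecompBelow E k) :
    HasPathDecomp E k 0 ∨ IsTriangular E := by
  refine or_iff_not_imp_left.2 fun hD => ?_
  have hle (v) (hv : parity E v = 0) : (evenNbrs E v).card ≤ 2 :=
    Nat.lt_succ_iff.1 ((hE.card_le v hv).lt_of_ne fun h3 =>
      hD (hasPathDecomp_of_card_evenNbrs_eq_three hE ih hv h3))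
  have hcard (v) (hv : parity E v = 0) : evenNbrs E v = ∅ ∨ (evenNbrs E v).card = 2 := by
    have hne : (evenNbrs E v).card ≠ 1 := fun heq => by
      obtain ⟨y, hy⟩ := Finset.card_eq_one.1 heq
      exact hD (hasPathDecomp_of_evenNbrs_eq_singleton hE ih hle hv hy)
    have := hle v hv
    rw [← Finset.card_eq_zero]
    lia
  have hpair {v w} (hv : parity E v = 0) (hw : w ∈ evenNbrs E v) :
      ∃ t ≠ w, evenNbrs E v = {w, t} := by
    have htwo := (hcard v hv).resolve_left (Finset.ne_empty_of_mem hw)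
    obtain ⟨t, ht⟩ : ∃ t, (evenNbrs E v).erase w = {t} := by
      rw [← Finset.card_eq_one, Finset.card_erase_of_mem hw, htwo]
    exact ⟨t, Finset.ne_of_mem_erase (ht ▸ Finset.mem_singleton_self t),
      by rw [← ht, Finset.insert_erase hw]⟩
  refine ⟨hcard, fun v hv w hw => ?_⟩
  have hw0 := (mem_evenNbrs.1 hw).2
  obtain ⟨t, htw, hNv⟩ := hpair hv hw
  obtain ⟨t', htv, hNw⟩ := hpair hw0 (mem_evenNbrs_comm hv hw)
  obtain rfl : t' = t := by
    by_contra hne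
    exact hD (hasPathDecomp_of_evenNbrs_eq_pairs hE ih hle hw0 hv
      (hNw.trans (Finset.pair_comm v t')) hNv htw.symm htv hne)
  rw [evenClosedNbhd, evenClosedNbhd, hNv, hNw, Finset.insert_comm]

end Triangular

section OddStar

variable [DecidableEq V] {E : Finset (Sym2 V)} {B : Finset V} {M : Finset (V × V)} {k : ℕ}
  {v w x : V}

/-- The edges joining the two vertices of each pair of `M`. -/
def pairEdges (M : Finset (V × V)) : Finset (Sym2 V) := M.image fun p => s(p.1, p.2)

lemma mem_pairEdges :
    s(v, w) ∈ pairEdges M ↔ ∃ p ∈ M, (v = p.1 ∧ w = p.2) ∨ (v = p.2 ∧ w = p.1) := by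
  simp only [pairEdges, Finset.mem_image, Sym2.eq_iff]
  grind

/-- The vertices that lie in `B` or in a pair of `M`. -/
def starSupport (B : Finset V) (M : Finset (V × V)) : Finset V :=
  B ∪ (M.image Prod.fst ∪ M.image Prod.snd)

lemma mem_starSupport : v ∈ starSupport B M ↔ v ∈ B ∨ ∃ p ∈ M, v = p.1 ∨ v = p.2 := by
  simp only [starSupport, Finset.mem_union, Finset.mem_image]
  grind

lemma mem_starSupport_of_mem_edges (hvx : v ≠ x) (hvw : s(v, w) ∈ starEdges x B ∪ pairEdges M) :
    v ∈ starSupport B M := by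
  rw [Finset.mem_union, mem_starEdges hvx, mem_pairEdges] at hvw
  rw [mem_starSupport]
  grind

/-- One path end at each odd vertex of `E \ (starEdges x B ∪ pairEdges M)`, except that each edge of
`M` has used up the end at its second vertex. -/
def oddStarEnds (E : Finset (Sym2 V)) (x : V) (B : Finset V) (M : Finset (V × V)) (v : V) : ℕ :=
  if v ∈ M.image Prod.snd then 0 else parity (E \ (starEdges x B ∪ pairEdges M)) v

variable [Fintype V]

/-- An odd vertex `x`, a set `B` of even neighbours of `x`, and a set `M` of edges `(a, b)` of
distinct even triangles whose third vertex lies in `B`, such that removing the star from `x` to `B`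
and the edges of `M` leaves `x` without even neighbours. -/
structure IsOddStar (E : Finset (Sym2 V)) (x : V) (B : Finset V) (M : Finset (V × V)) : Prop where
  parity_eq_one : parity E x = 1
  subset : B ⊆ evenNbrs E x
  parity_fst : ∀ p ∈ M, parity E p.1 = 0
  snd_mem : ∀ p ∈ M, p.2 ∈ evenNbrs E p.1
  fst_notMem : ∀ p ∈ M, p.1 ∉ B
  snd_notMem : ∀ p ∈ M, p.2 ∉ evenNbrs E x
  evenNbrs_fst : ∀ p ∈ M, evenNbrs E p.1 ⊆ insert p.2 B
  injective : ∀ p ∈ M, ∀ q ∈ M, evenClosedNbhd E p.1 = evenClosedNbhd E q.1 → p = q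
  evenNbrs_subset : evenNbrs E x ⊆ B ∪ M.image Prod.fst
  card_le : ∀ v ∈ B, (evenNbrs E v \ starSupport B M).card ≤ 1

namespace IsOddStar

variable (h : IsOddStar E x B M)
include h

lemma parity_snd : ∀ p ∈ M, parity E p.2 = 0 := fun p hp => (mem_evenNbrs.1 (h.snd_mem p hp)).2

lemma parity_of_mem (hv : v ∈ starSupport B M) : parity E v = 0 := by
  rcases mem_starSupport.1 hv with hv | ⟨p, hp, rfl | rfl⟩
  exacts [(mem_evenNbrs.1 (h.subset hv)).2, h.parity_fst p hp, h.parity_snd p hp]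

lemma notMem_starSupport : x ∉ starSupport B M := fun hx => by
  have := h.parity_of_mem hx
  have := h.parity_eq_one
  lia

lemma notMem : x ∉ B := fun hx => h.notMem_starSupport (mem_starSupport.2 (.inl hx))

lemma snd_notMem_left : ∀ p ∈ M, p.2 ∉ B := fun p hp hB => h.snd_notMem p hp (h.subset hB)

lemma evenNbrs_subset_starSupport : evenNbrs E x ⊆ starSupport B M :=
  h.evenNbrs_subset.trans (Finset.union_subset_union_right Finset.subset_union_left)

lemma notMem_pairEdges (w : V) : s(x, w) ∉ pairEdges M := fun hw =>
  h.notMem_starSupport (mem_starSupport.2 (by rw [mem_pairEdges] at hw; grind))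

lemma edges_subset : starEdges x B ∪ pairEdges M ⊆ E :=
  Finset.union_subset (Finset.image_subset_iff.2 fun _ hb => (mem_evenNbrs.1 (h.subset hb)).1)
    (Finset.image_subset_iff.2 fun p hp => (mem_evenNbrs.1 (h.snd_mem p hp)).1)

lemma disjoint_edges : Disjoint (starEdges x B) (pairEdges M) := by
  refine Finset.disjoint_left.2 fun e he => ?_
  obtain ⟨b, -, rfl⟩ := Finset.mem_image.1 he
  exact h.notMem_pairEdges b

lemma parity_sdiff_self :
    parity (E \ (starEdges x B ∪ pairEdges M)) x = (1 + B.card) % 2 := by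
  rw [parity_sdiff h.edges_subset, edgeDeg_union h.disjoint_edges, edgeDeg_starEdges h.notMem,
    if_pos rfl, edgeDeg_eq_zero h.notMem_pairEdges, h.parity_eq_one, add_zero]

lemma parity_sdiff_of_notMem (hvx : v ≠ x) (hv : v ∉ starSupport B M) :
    parity (E \ (starEdges x B ∪ pairEdges M)) v = parity E v :=
  _root_.parity_sdiff_of_notMem h.edges_subset fun _ hw =>
    hv (mem_starSupport_of_mem_edges hvx hw)

variable (hE : Admissible E) (hT : IsTriangular E)

include hT

lemma evenClosedNbhd_snd (p) (hp : p ∈ M) : evenClosedNbhd E p.2 = evenClosedNbhd E p.1 :=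
  hT.evenClosedNbhd_eq p.1 (h.parity_fst p hp) p.2 (h.snd_mem p hp)

lemma snd_injective (p) (hp : p ∈ M) (q) (hq : q ∈ M) (hpq : p.2 = q.2) : p = q :=
  h.injective p hp q hq
    (by rw [← h.evenClosedNbhd_snd hT p hp, hpq, h.evenClosedNbhd_snd hT q hq])

lemma evenNbrs_subset_of_mem_pair (p) (hp : p ∈ M) (hv : v = p.1 ∨ v = p.2) :
    evenNbrs E v ⊆ starSupport B M := by
  have hcl : evenClosedNbhd E v = evenClosedNbhd E p.1 := by
    rcases hv with rfl | rfl
    exacts [rfl, h.evenClosedNbhd_snd hT p hp]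
  refine (Finset.subset_insert v _).trans (hcl.trans_subset fun u hu => mem_starSupport.2 ?_)
  have hsub : evenNbrs E p.1 ⊆ insert p.2 B := h.evenNbrs_fst p hp
  grind [evenClosedNbhd]

include hE

lemma fst_ne_snd (p) (hp : p ∈ M) (q) (hq : q ∈ M) : p.1 ≠ q.2 := fun hpq => by
  obtain rfl := h.injective p hp q hq (by rw [hpq, h.evenClosedNbhd_snd hT q hq])
  exact hE.notMem_evenNbrs_self p.1 (by simpa [← hpq] using h.snd_mem p hp)

lemma edgeDeg_edges (hv : v ∈ starSupport B M) :
    edgeDeg (starEdges x B ∪ pairEdges M) v = 1 := by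
  have hvx : v ≠ x := fun hvx => h.notMem_starSupport (hvx ▸ hv)
  have hedges (w) : s(v, w) ∈ starEdges x B ∪ pairEdges M ↔
      (w = x ∧ v ∈ B) ∨ ∃ p ∈ M, (v = p.1 ∧ w = p.2) ∨ (v = p.2 ∧ w = p.1) := by
    rw [Finset.mem_union, mem_starEdges hvx, mem_pairEdges]
  have hfst := h.fst_notMem
  have hsnd := h.snd_notMem_left
  have hne := h.fst_ne_snd hE hT
  rcases mem_starSupport.1 hv with hv | ⟨p, hp, rfl | rfl⟩
  · exact edgeDeg_eq_one ((hedges x).2 (.inl ⟨rfl, hv⟩)) fun w hw => by grind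
  · have hinj (q) (hq : q ∈ M) (hpq : p.1 = q.1) := h.injective p hp q hq (by rw [hpq])
    exact edgeDeg_eq_one ((hedges p.2).2 (.inr ⟨p, hp, .inl ⟨rfl, rfl⟩⟩)) fun w hw => by grind
  · have hinj := h.snd_injective hT p hp
    exact edgeDeg_eq_one ((hedges p.1).2 (.inr ⟨p, hp, .inr ⟨rfl, rfl⟩⟩)) fun w hw => by grind

lemma parity_sdiff_of_mem (hv : v ∈ starSupport B M) :
    parity (E \ (starEdges x B ∪ pairEdges M)) v = 1 := by
  rw [parity_sdiff h.edges_subset, h.parity_of_mem hv, h.edgeDeg_edges hE hT hv]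

lemma evenNbrs_sdiff_subset (v : V) :
    evenNbrs (E \ (starEdges x B ∪ pairEdges M)) v ⊆ insert x (evenNbrs E v \ starSupport B M) := by
  intro u hu
  obtain ⟨hvu, hu0⟩ := mem_evenNbrs.1 hu
  rcases eq_or_ne u x with rfl | hux
  · exact Finset.mem_insert_self _ _
  have huU : u ∉ starSupport B M := fun hU => by
    have := h.parity_sdiff_of_mem hE hT hU
    lia
  rw [h.parity_sdiff_of_notMem hux huU] at hu0
  exact Finset.mem_insert_of_mem (Finset.mem_sdiff.2
    ⟨mem_evenNbrs.2 ⟨(Finset.mem_sdiff.1 hvu).1, hu0⟩, huU⟩)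

lemma evenNbrs_sdiff_self : evenNbrs (E \ (starEdges x B ∪ pairEdges M)) x = ∅ := by
  refine Finset.eq_empty_of_forall_notMem fun u hu => ?_
  rcases Finset.mem_insert.1 (h.evenNbrs_sdiff_subset hE hT x hu) with rfl | hu'
  · exact hE.loopless u (Finset.mem_sdiff.1 (mem_evenNbrs.1 hu).1).1
  · obtain ⟨huN, huU⟩ := Finset.mem_sdiff.1 hu'
    exact huU (h.evenNbrs_subset_starSupport huN)

theorem admissible_sdiff : Admissible (E \ (starEdges x B ∪ pairEdges M)) := by
  refine hE.sdiff h.edges_subset fun v w hvw => ?_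
  rcases eq_or_ne v x with rfl | hvx
  · simp [h.evenNbrs_sdiff_self hE hT]
  have hvU := mem_starSupport_of_mem_edges hvx hvw
  have hv1 := h.parity_sdiff_of_mem hE hT hvU
  refine ⟨?_, fun hv0 => by lia⟩
  have hsub := h.evenNbrs_sdiff_subset hE hT v
  rcases mem_starSupport.1 hvU with hvB | ⟨p, hp, hv⟩
  · refine (Finset.card_le_card fun u hu => ?_).trans (h.card_le v hvB)
    refine (Finset.mem_insert.1 (hsub hu)).resolve_left ?_
    rintro rfl
    exact (Finset.mem_sdiff.1 (mem_evenNbrs.1 hu).1).2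
      (Finset.mem_union_left _ ((mem_starEdges hvx).2 ⟨rfl, hvB⟩))
  · rw [Finset.sdiff_eq_empty_iff_subset.2 (h.evenNbrs_subset_of_mem_pair hT p hp hv)] at hsub
    exact Finset.card_le_card hsub

lemma hasPathDecomp_sdiff_starEdges (ih : HasPathDecompBelow E k) (hB : B.Nonempty)
    (heven : Even B.card ∨ ∀ p ∈ M, p.1 ∉ evenNbrs E x) :
    HasPathDecomp (E \ starEdges x B) k (oddStarEnds E x B M) := by
  set F := starEdges x B ∪ pairEdges M with hF
  have hne : F.Nonempty := (hB.image _).mono Finset.subset_union_left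
  have hEF : E \ F ∪ pairEdges M = E \ starEdges x B := by
    have := Finset.disjoint_left.1 h.disjoint_edges
    have hFE : F ⊆ E := h.edges_subset
    grind
  have hmem {p} (hp : p ∈ M) {v} (hv : v = p.1 ∨ v = p.2) : v ∈ starSupport B M :=
    mem_starSupport.2 (.inr ⟨p, hp, hv⟩)
  rw [← hEF]
  refine ((ih.sdiff h.edges_subset hne (h.admissible_sdiff hE hT)).add_matching M
    (fun p hp => h.fst_ne_snd hE hT p hp p hp)
    (fun p hp hpF => (Finset.mem_sdiff.1 hpF).2
      (Finset.mem_union_right _ (Finset.mem_image_of_mem _ hp)))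
    (fun p hp => (h.parity_sdiff_of_mem hE hT (hmem hp (.inr rfl))).ge)
    (fun p hp v hv => ?_) fun p hp q hq hpq => ?_).mono fun v => by grind [oddStarEnds]
  · rw [Nat.one_le_iff_ne_zero]
    intro hv0
    rcases Finset.mem_insert.1 (h.evenNbrs_sdiff_subset hE hT p.1 (mem_evenNbrs.2 ⟨hv, hv0⟩))
      with rfl | hvU
    · have hp1 : p.1 ∈ evenNbrs E v :=
        mem_evenNbrs.2 ⟨Sym2.eq_swap ▸ (Finset.mem_sdiff.1 hv).1, h.parity_fst p hp⟩
      rw [h.parity_sdiff_self] at hv0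
      exact heven.elim (fun hB => by grind) fun hM => hM p hp hp1
    · obtain ⟨hvN, hvU⟩ := Finset.mem_sdiff.1 hvU
      exact hvU (h.evenNbrs_subset_of_mem_pair hT p hp (.inl rfl) hvN)
  · refine ⟨fun hE' => hpq (h.injective p hp q hq ?_),
      fun h1 => hpq (h.injective p hp q hq (by rw [h1])), h.fst_ne_snd hE hT p hp q hq,
      fun h2 => hpq (h.snd_injective hT p hp q hq h2)⟩
    rw [← h.evenClosedNbhd_snd hT q hq]
    exact (hT.evenClosedNbhd_eq p.1 (h.parity_fst p hp) q.2
      (mem_evenNbrs.2 ⟨(Finset.mem_sdiff.1 hE').1, h.parity_snd q hq⟩)).symm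

omit hE hT in
lemma oddStarEnds_self : oddStarEnds E x B M x = (1 + B.card) % 2 := by
  rw [oddStarEnds, if_neg, h.parity_sdiff_self]
  exact fun hx => h.notMem_starSupport
    (Finset.mem_union_right _ (Finset.mem_union_right _ hx))

lemma oddStarEnds_of_mem (hv : v ∈ B ∪ M.image Prod.fst) : oddStarEnds E x B M v = 1 := by
  rw [oddStarEnds, if_neg, h.parity_sdiff_of_mem hE hT]
  · rw [starSupport, ← Finset.union_assoc]
    exact Finset.mem_union_left _ hv
  · have hsnd := h.snd_notMem_left
    have hne := h.fst_ne_snd hE hT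
    grind

omit hE hT in
lemma parity_of_oddStarEnds_eq_zero (hvx : v ≠ x) (hv : oddStarEnds E x B M v = 0) :
    parity E v = 0 := by
  by_cases hvU : v ∈ starSupport B M
  · exact h.parity_of_mem hvU
  · rwa [oddStarEnds, if_neg, h.parity_sdiff_of_notMem hvx hvU] at hv
    exact fun hv2 => hvU (Finset.mem_union_right _ (Finset.mem_union_right _ hv2))

lemma exists_hasPathDecomp_sdiff_starEdges (ih : HasPathDecompBelow E k) (hB : B.Nonempty)
    (heven : Even B.card ∨ ∀ p ∈ M, p.1 ∉ evenNbrs E x) :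
    ∃ R ⊆ B, R.card ≤ (B \ R).card ∧ ∃ g, HasPathDecomp (E \ starEdges x R) k g ∧
      g x = (1 + B.card) % 2 + (B \ R).card ∧
      ∀ v, v ≠ x → g v = 0 → parity E v = 0 ∧ v ∉ R ∪ M.image Prod.fst := by
  have hends {v} (hv : v ∈ B ∪ M.image Prod.fst) := h.oddStarEnds_of_mem hE hT hv
  obtain ⟨A, hA, hcard, hdec⟩ :=
    (h.hasPathDecomp_sdiff_starEdges hE hT ih hB heven).exists_half_star h.notMem
      (fun b hb hxb => (Finset.mem_sdiff.1 hxb).2 (mem_starEdges_self.2 hb))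
      (fun b hb => (hends (Finset.mem_union_left _ hb)).ge) fun v hv => by
        have hxv := (Finset.mem_sdiff.1 hv).1
        refine Nat.one_le_iff_ne_zero.2 fun hv0 => ?_
        have hvN := mem_evenNbrs.2 ⟨hxv, h.parity_of_oddStarEnds_eq_zero
          (fun hvx => hE.loopless x (hvx ▸ hxv)) hv0⟩
        have := hends (h.evenNbrs_subset hvN)
        lia
  have hstar : E \ starEdges x B ∪ starEdges x A = E \ starEdges x (B \ A) := by
    have hBE : starEdges x B ⊆ E := Finset.subset_union_left.trans h.edges_subset
    have hAB : starEdges x (B \ A) = starEdges x B \ starEdges x A :=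
      Finset.image_sdiff _ _ (fun _ _ => Sym2.congr_right.1)
    have hAB' : starEdges x A ⊆ starEdges x B := Finset.image_subset_image hA
    grind
  refine ⟨B \ A, Finset.sdiff_subset, ?_, _, hstar ▸ hdec, ?_, fun v hvx hv => ?_⟩
  · rwa [Finset.sdiff_sdiff_eq_self hA]
  · rw [Finset.sdiff_sdiff_eq_self hA, starShift_self, h.oddStarEnds_self]
  · by_cases hvA : v ∈ A
    · have := h.fst_notMem
      exact ⟨(mem_evenNbrs.1 (h.subset (hA hvA))).2, by grind⟩
    · rw [starShift_of_notMem hvx hvA] at hv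
      exact ⟨h.parity_of_oddStarEnds_eq_zero hvx hv, fun hvR => by
        have := hends (Finset.union_subset_union_left Finset.sdiff_subset hvR)
        lia⟩

end IsOddStar

lemma HasPathDecomp.of_sdiff_starEdges {R : Finset V} {g : V → ℕ}
    (h : HasPathDecomp (E \ starEdges x R) k g) (hRE : starEdges x R ⊆ E) (hx : x ∉ R)
    (hz : ∀ r ∈ R, (zeroNbrs (E \ starEdges x R) g r).card ≤ 2)
    (hg : R.card + 1 ≤ g x)
    (hr : R.card + 2 ≤ g x ∨ ∃ r ∈ R, (zeroNbrs (E \ starEdges x R) g r).card ≤ 1) :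
    HasPathDecomp E k 0 := by
  have hnotMem (r) (hr : r ∈ R) : s(x, r) ∉ E \ starEdges x R := fun hxr =>
    (Finset.mem_sdiff.1 hxr).2 (mem_starEdges_self.2 hr)
  rcases hr with hg | ⟨r, hr, hr1⟩
  · rw [← Finset.sdiff_union_of_subset hRE]
    exact (h.add_star 2 R hx hnotMem hg hz).mono fun v => Nat.zero_le _
  have hrx : r ≠ x := fun hrx => hx (hrx ▸ hr)
  have hcard := Finset.card_erase_add_one hr
  have hdec := h.add_star 2 (R.erase r) (fun hxr => hx (Finset.mem_of_mem_erase hxr))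
    (fun q hq => hnotMem q (Finset.mem_of_mem_erase hq)) (by lia)
    fun q hq => hz q (Finset.mem_of_mem_erase hq)
  have hxr : s(r, x) ∉ E \ starEdges x R ∪ starEdges x (R.erase r) := by
    rw [Sym2.eq_swap, Finset.mem_union, mem_starEdges_self]
    exact fun hxr => hxr.elim (hnotMem r hr) (Finset.notMem_erase r R)
  have hE : insert s(r, x) (E \ starEdges x R ∪ starEdges x (R.erase r)) = E := by
    rw [Sym2.eq_swap, ← Finset.union_insert, ← starEdges_insert, Finset.insert_erase hr,
      Finset.sdiff_union_of_subset hRE]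
  rw [← hE]
  refine hdec.insert_edge_zero hrx hxr ((Finset.card_le_card fun v hv => ?_).trans_lt
    (hr1.trans_lt (b := 1) (by rw [if_pos rfl]; lia)))
  rw [mem_zeroNbrs, Finset.mem_union, mem_starEdges hrx] at hv
  have : v ≠ x := by
    rintro rfl
    exact hxr (Finset.mem_union.2 (hv.1.imp_right fun hv => (mem_starEdges hrx).2 hv))
  rw [mem_zeroNbrs]
  grind

theorem IsOddStar.hasPathDecomp_or (h : IsOddStar E x B M) (hE : Admissible E)
    (hT : IsTriangular E) (ih : HasPathDecompBelow E k) (hB : B.Nonempty)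
    (heven : Even B.card ∨ ∀ p ∈ M, p.1 ∉ evenNbrs E x) :
    HasPathDecomp E k 0 ∨ ∃ R ⊆ B, R.Nonempty ∧ R.card = B.card / 2 ∧
      ∀ r ∈ R, (evenNbrs E r).card = 2 ∧ Disjoint (evenNbrs E r) (R ∪ M.image Prod.fst) := by
  obtain ⟨R, hRB, hcard, g, hdec, hgx, hg⟩ :=
    h.exists_hasPathDecomp_sdiff_starEdges hE hT ih hB heven
  have hxR : x ∉ R := fun hx => h.notMem (hRB hx)
  have hRE : starEdges x R ⊆ E :=
    (Finset.image_subset_image hRB).trans (Finset.subset_union_left.trans h.edges_subset)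
  have hsum : (B \ R).card + R.card = B.card := Finset.card_sdiff_add_card_eq_card hRB
  have hzero (r) (hr : r ∈ R) : zeroNbrs (E \ starEdges x R) g r ⊆
      evenNbrs E r \ (R ∪ M.image Prod.fst) := fun v hv => by
    obtain ⟨hrv, hv0⟩ := mem_zeroNbrs.1 hv
    obtain ⟨hrvE, hrvR⟩ := Finset.mem_sdiff.1 hrv
    have hvx : v ≠ x := by
      rintro rfl
      exact hrvR (Sym2.eq_swap ▸ mem_starEdges_self.2 hr)
    obtain ⟨hvE, hvR⟩ := hg v hvx hv0
    exact Finset.mem_sdiff.2 ⟨mem_evenNbrs.2 ⟨hrvE, hvE⟩, hvR⟩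
  have hle (r) (hr : r ∈ R) : (evenNbrs E r).card ≤ 2 :=
    hT.card_le (mem_evenNbrs.1 (h.subset (hRB hr))).2
  by_cases hobs : R.Nonempty ∧ g x ≤ R.card + 1 ∧
      ∀ r ∈ R, 2 ≤ (evenNbrs E r \ (R ∪ M.image Prod.fst)).card
  · obtain ⟨hR, hgR, hdisj⟩ := hobs
    refine .inr ⟨R, hRB, hR, by lia, fun r hr => ?_⟩
    have := hdisj r hr
    have := hle r hr
    have := Finset.card_sdiff_add_card_inter (evenNbrs E r) (R ∪ M.image Prod.fst)
    rw [Finset.disjoint_iff_inter_eq_empty, ← Finset.card_eq_zero]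
    lia
  · refine .inl ?_
    rcases R.eq_empty_or_nonempty with rfl | hR
    · rw [starEdges, Finset.image_empty, Finset.sdiff_empty] at hdec
      exact hdec.mono fun v => Nat.zero_le (g v)
    refine hdec.of_sdiff_starEdges hRE hxR (fun r hr => ?_) (by lia) ?_
    · exact (Finset.card_le_card ((hzero r hr).trans Finset.sdiff_subset)).trans (hle r hr)
    · by_contra! hcon
      exact hobs ⟨hR, by lia, fun r hr =>
        (hcon.2 r hr).trans_le (Finset.card_le_card (hzero r hr))⟩

end OddStar

/-! ### The even triangles meeting the neighbourhood of an odd vertex -/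

section TriangleLabelling

variable [DecidableEq V] [Fintype V] {E : Finset (Sym2 V)} {N T : Finset V}
  {S : Finset (Finset V)} {a b c : Finset V → V} {k : ℕ} {v w x : V}

lemma self_mem_evenClosedNbhd (E : Finset (Sym2 V)) (v : V) : v ∈ evenClosedNbhd E v :=
  Finset.mem_insert_self v _

lemma evenNbrs_subset_evenClosedNbhd (E : Finset (Sym2 V)) (v : V) :
    evenNbrs E v ⊆ evenClosedNbhd E v :=
  Finset.subset_insert v _

lemma Admissible.card_evenClosedNbhd (hE : Admissible E) (v : V) :
    (evenClosedNbhd E v).card = (evenNbrs E v).card + 1 :=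
  Finset.card_insert_of_notMem (hE.notMem_evenNbrs_self v)

lemma IsTriangular.evenClosedNbhd_eq_of_mem (hT : IsTriangular E) (hv : parity E v = 0)
    (hw : w ∈ evenClosedNbhd E v) : evenClosedNbhd E w = evenClosedNbhd E v := by
  rcases Finset.mem_insert.1 hw with rfl | hw
  exacts [rfl, hT.evenClosedNbhd_eq v hv w hw]

lemma parity_eq_zero_of_mem_evenClosedNbhd (hv : parity E v = 0)
    (hw : w ∈ evenClosedNbhd E v) : parity E w = 0 := by
  rcases Finset.mem_insert.1 hw with rfl | hw
  exacts [hv, (mem_evenNbrs.1 hw).2]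

lemma mem_evenNbrs_of_evenClosedNbhd_eq (h : evenClosedNbhd E v = evenClosedNbhd E w)
    (hwv : w ≠ v) : w ∈ evenNbrs E v := by
  have hw : w ∈ evenClosedNbhd E v := h ▸ self_mem_evenClosedNbhd E w
  exact Finset.mem_of_mem_insert_of_ne hw hwv

/-- The even triangles that meet `N` without being contained in it (together with the closed
neighbourhoods that are not triangles, when `E` is not triangular). -/
def partialTriangles (E : Finset (Sym2 V)) (N : Finset V) : Finset (Finset V) :=
  (N.filter fun v => ¬ evenClosedNbhd E v ⊆ N).image (evenClosedNbhd E)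

lemma evenClosedNbhd_mem_partialTriangles (hv : v ∈ N) (hvN : ¬ evenClosedNbhd E v ⊆ N) :
    evenClosedNbhd E v ∈ partialTriangles E N :=
  Finset.mem_image_of_mem _ (Finset.mem_filter.2 ⟨hv, hvN⟩)

/-- A labelling of the vertices of each triangle `T` in `partialTriangles E N` as `a T`, `b T` and
`c T`, where `c T` lies in `N` and `b T` does not. -/
structure IsTriangleLabelling (E : Finset (Sym2 V)) (N : Finset V) (a b c : Finset V → V) :
    Prop where
  eq_insert : ∀ T ∈ partialTriangles E N, T = {a T, b T, c T}
  fst_ne_snd : ∀ T ∈ partialTriangles E N, a T ≠ b T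
  fst_ne_third : ∀ T ∈ partialTriangles E N, a T ≠ c T
  snd_notMem : ∀ T ∈ partialTriangles E N, b T ∉ N
  third_mem : ∀ T ∈ partialTriangles E N, c T ∈ N
  parity_eq_zero : ∀ T ∈ partialTriangles E N, ∀ v ∈ T, parity E v = 0
  evenClosedNbhd_eq : ∀ T ∈ partialTriangles E N, ∀ v ∈ T, evenClosedNbhd E v = T

lemma IsTriangular.exists_isTriangleLabelling [Nonempty V] (hT : IsTriangular E)
    (hE : Admissible E) (hN : ∀ v ∈ N, parity E v = 0) :
    ∃ a b c, IsTriangleLabelling E N a b c := by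
  have hex (T) (hTN : T ∈ partialTriangles E N) : ∃ a b c, T = {a, b, c} ∧ a ≠ b ∧ a ≠ c ∧
      b ∉ N ∧ c ∈ N ∧ ∀ v ∈ T, parity E v = 0 ∧ evenClosedNbhd E v = T := by
    obtain ⟨c, hc, rfl⟩ := Finset.mem_image.1 hTN
    obtain ⟨hcN, hsub⟩ := Finset.mem_filter.1 hc
    obtain ⟨b, hb, hbN⟩ := Finset.not_subset.1 hsub
    have hbc : b ∈ evenNbrs E c := Finset.mem_of_mem_insert_of_ne hb fun h => hbN (h ▸ hcN)
    have htwo := (hT.card c (hN c hcN)).resolve_left (Finset.ne_empty_of_mem hbc)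
    obtain ⟨a, ha⟩ : ∃ a, (evenNbrs E c).erase b = {a} := by
      rw [← Finset.card_eq_one, Finset.card_erase_of_mem hbc, htwo]
    obtain ⟨hab, hac⟩ := Finset.mem_erase.1 (ha ▸ Finset.mem_singleton_self a)
    refine ⟨a, b, c, ?_, hab, fun h => hE.notMem_evenNbrs_self c (h ▸ hac), hbN, hcN, fun v hv =>
      ⟨parity_eq_zero_of_mem_evenClosedNbhd (hN c hcN) hv,
        hT.evenClosedNbhd_eq_of_mem (hN c hcN) hv⟩⟩
    rw [evenClosedNbhd, ← Finset.insert_erase hbc, ha]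
    grind
  choose! a b c heq hab hac hb hc hT using hex
  exact ⟨a, b, c, heq, hab, hac, hb, hc, fun T hTN v hv => (hT T hTN v hv).1,
    fun T hTN v hv => (hT T hTN v hv).2⟩

/-- The vertices of `N`, where each triangle of `S` contributes its vertex `c T` only. -/
def starLeaves (E : Finset (Sym2 V)) (N : Finset V) (c : Finset V → V) (S : Finset (Finset V)) :
    Finset V :=
  N.filter fun v => evenClosedNbhd E v ∈ S → v = c (evenClosedNbhd E v)

lemma mem_starLeaves : v ∈ starLeaves E N c S ↔
    v ∈ N ∧ (evenClosedNbhd E v ∈ S → v = c (evenClosedNbhd E v)) :=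
  Finset.mem_filter

lemma starLeaves_subset (E : Finset (Sym2 V)) (N : Finset V) (c : Finset V → V)
    (S : Finset (Finset V)) : starLeaves E N c S ⊆ N :=
  Finset.filter_subset _ N

lemma IsTriangular.mem_starLeaves_of_mem_evenNbrs (hT : IsTriangular E) (hv : parity E v = 0)
    (hvS : evenClosedNbhd E v ∉ S) (hw : w ∈ evenNbrs E v) (hwN : w ∈ N) :
    w ∈ starLeaves E N c S := by
  rw [mem_starLeaves, hT.evenClosedNbhd_eq v hv w hw]
  exact ⟨hwN, fun h => absurd h hvS⟩

namespace IsTriangleLabelling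

variable (h : IsTriangleLabelling E N a b c)
include h

lemma fst_mem (hTN : T ∈ partialTriangles E N) : a T ∈ T := by
  have := h.eq_insert T hTN
  grind

lemma snd_mem (hTN : T ∈ partialTriangles E N) : b T ∈ T := by
  have := h.eq_insert T hTN
  grind

lemma third_mem_self (hTN : T ∈ partialTriangles E N) : c T ∈ T := by
  have := h.eq_insert T hTN
  grind

lemma eq_or (hTN : T ∈ partialTriangles E N) (hv : v ∈ T) : v = a T ∨ v = b T ∨ v = c T := by
  have := h.eq_insert T hTN
  grind

lemma mem_evenNbrs_of_mem (hTN : T ∈ partialTriangles E N) (hv : v ∈ T) (hw : w ∈ T)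
    (hwv : w ≠ v) : w ∈ evenNbrs E v :=
  mem_evenNbrs_of_evenClosedNbhd_eq
    ((h.evenClosedNbhd_eq T hTN v hv).trans (h.evenClosedNbhd_eq T hTN w hw).symm) hwv

lemma mem_of_mem_evenNbrs (hTN : T ∈ partialTriangles E N) (hv : v ∈ T) (hw : w ∈ evenNbrs E v) :
    w ∈ T :=
  h.evenClosedNbhd_eq T hTN v hv ▸ evenNbrs_subset_evenClosedNbhd E v hw

lemma third_mem_starLeaves (hTN : T ∈ partialTriangles E N) : c T ∈ starLeaves E N c S := by
  rw [mem_starLeaves, h.evenClosedNbhd_eq T hTN _ (h.third_mem_self hTN)]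
  exact ⟨h.third_mem T hTN, fun _ => rfl⟩

lemma subset_starLeaves_union (hS : S ⊆ partialTriangles E N) :
    N ⊆ starLeaves E N c S ∪ S.image a := by
  intro v hv
  by_cases hvS : evenClosedNbhd E v ∈ S
  · have hb := h.snd_notMem _ (hS hvS)
    have := h.eq_or (hS hvS) (self_mem_evenClosedNbhd E v)
    rw [Finset.mem_union, Finset.mem_image, mem_starLeaves]
    grind
  · exact Finset.mem_union_left _ (mem_starLeaves.2 ⟨hv, fun h' => absurd h' hvS⟩)

lemma card_evenNbrs_sdiff_starSupport_le (hT : IsTriangular E) (hN : ∀ v ∈ N, parity E v = 0)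
    (hS : S ⊆ partialTriangles E N) (ha : ∀ T ∈ partialTriangles E N, T ∉ S → a T ∈ N)
    (hv : v ∈ starLeaves E N c S) :
    (evenNbrs E v \ starSupport (starLeaves E N c S) (S.image fun T => (a T, b T))).card ≤ 1 := by
  set U := starSupport (starLeaves E N c S) (S.image fun T => (a T, b T))
  have hvN := (mem_starLeaves.1 hv).1
  have hvv := self_mem_evenClosedNbhd E v
  have hleaves {w} (hw : w ∈ starLeaves E N c S) : w ∈ U := mem_starSupport.2 (.inl hw)
  by_cases hvS : evenClosedNbhd E v ∈ S
  · refine (Finset.card_eq_zero.2 (Finset.sdiff_eq_empty_iff_subset.2 fun w hw => ?_)).trans_le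
      zero_le_one
    have hp := Finset.mem_image_of_mem (fun T => (a T, b T)) hvS
    rcases h.eq_or (hS hvS) (h.mem_of_mem_evenNbrs (hS hvS) hvv hw) with hw | hw | hw
    · exact mem_starSupport.2 (.inr ⟨_, hp, .inl hw⟩)
    · exact mem_starSupport.2 (.inr ⟨_, hp, .inr hw⟩)
    · exact hleaves (hw ▸ h.third_mem_starLeaves (hS hvS))
  · have hmem {w} (hw : w ∈ evenNbrs E v \ U) : w ∈ evenNbrs E v ∧ w ∉ N := by
      obtain ⟨hw, hwU⟩ := Finset.mem_sdiff.1 hw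
      exact ⟨hw, fun hwN =>
        hwU (hleaves (hT.mem_starLeaves_of_mem_evenNbrs (hN v hvN) hvS hw hwN))⟩
    by_cases hvN' : evenClosedNbhd E v ⊆ N
    · refine (Finset.card_eq_zero.2 (Finset.eq_empty_of_forall_notMem fun w hw => ?_)).trans_le
        zero_le_one
      exact (hmem hw).2 (hvN' (evenNbrs_subset_evenClosedNbhd E v (hmem hw).1))
    · have hTN := evenClosedNbhd_mem_partialTriangles hvN hvN'
      refine (Finset.card_le_card (t := {b (evenClosedNbhd E v)}) fun w hw => ?_).trans
        (Finset.card_singleton _).le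
      have haN := ha _ hTN hvS
      have hcN := h.third_mem _ hTN
      have := h.eq_or hTN (h.mem_of_mem_evenNbrs hTN hvv (hmem hw).1)
      grind

end IsTriangleLabelling

theorem IsTriangleLabelling.isOddStar (h : IsTriangleLabelling E (evenNbrs E x) a b c)
    (hE : Admissible E) (hT : IsTriangular E) (hx : parity E x = 1)
    (hS : S ⊆ partialTriangles E (evenNbrs E x))
    (ha : ∀ T ∈ partialTriangles E (evenNbrs E x), T ∉ S → a T ∈ evenNbrs E x) :
    IsOddStar E x (starLeaves E (evenNbrs E x) c S) (S.image fun T => (a T, b T)) where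
  parity_eq_one := hx
  subset := starLeaves_subset E _ c S
  parity_fst := Finset.forall_mem_image.2 fun T hTS =>
    h.parity_eq_zero T (hS hTS) _ (h.fst_mem (hS hTS))
  snd_mem := Finset.forall_mem_image.2 fun T hTS =>
    h.mem_evenNbrs_of_mem (hS hTS) (h.fst_mem (hS hTS)) (h.snd_mem (hS hTS))
      (h.fst_ne_snd T (hS hTS)).symm
  fst_notMem := Finset.forall_mem_image.2 fun T hTS haB => by
    have haT := (mem_starLeaves.1 haB).2
    rw [h.evenClosedNbhd_eq T (hS hTS) _ (h.fst_mem (hS hTS))] at haT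
    exact h.fst_ne_third T (hS hTS) (haT hTS)
  snd_notMem := Finset.forall_mem_image.2 fun T hTS => h.snd_notMem T (hS hTS)
  evenNbrs_fst := Finset.forall_mem_image.2 fun T hTS w hw => by
    have hwa : w ≠ a T := fun hwa => hE.notMem_evenNbrs_self _ (hwa ▸ hw)
    have hcB := h.third_mem_starLeaves (S := S) (hS hTS)
    have := h.eq_or (hS hTS) (h.mem_of_mem_evenNbrs (hS hTS) (h.fst_mem (hS hTS)) hw)
    grind
  injective := Finset.forall_mem_image.2 fun T hTS =>
      Finset.forall_mem_image.2 fun T' hTS' hTT' => by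
    rw [h.evenClosedNbhd_eq T (hS hTS) _ (h.fst_mem (hS hTS)),
      h.evenClosedNbhd_eq T' (hS hTS') _ (h.fst_mem (hS hTS'))] at hTT'
    rw [hTT']
  evenNbrs_subset := by
    rw [Finset.image_image]
    exact h.subset_starLeaves_union hS
  card_le _ hv :=
    h.card_evenNbrs_sdiff_starSupport_le hT (fun _ hv => (mem_evenNbrs.1 hv).2) hS ha hv

end TriangleLabelling

section Attachment

variable [DecidableEq V] [Fintype V] {E : Finset (Sym2 V)} {B N R T : Finset V}
  {S : Finset (Finset V)} {a b c : Finset V → V} {k : ℕ} {v w x : V}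

/-- Half of the leaves `B` of a star in which every triangle of `S` is represented by one leaf,
obstructing the completion of a path decomposition by that star. -/
structure IsStarObstruction (E : Finset (Sym2 V)) (S : Finset (Finset V)) (B R : Finset V) :
    Prop where
  subset : R ⊆ B
  nonempty : R.Nonempty
  card_eq : R.card = B.card / 2
  notMem : ∀ r ∈ R, evenClosedNbhd E r ∉ S
  card_evenNbrs : ∀ r ∈ R, (evenNbrs E r).card = 2
  disjoint : ∀ r ∈ R, Disjoint (evenNbrs E r) R

lemma IsTriangleLabelling.hasPathDecomp_or
    (h : IsTriangleLabelling E (evenNbrs E x) a b c) (hE : Admissible E) (hT : IsTriangular E)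
    (ih : HasPathDecompBelow E k) (hx : parity E x = 1) (hne : (evenNbrs E x).Nonempty)
    (hS : S ⊆ partialTriangles E (evenNbrs E x))
    (ha : ∀ T ∈ partialTriangles E (evenNbrs E x), T ∉ S → a T ∈ evenNbrs E x)
    (heven : Even (starLeaves E (evenNbrs E x) c S).card ∨ ∀ T ∈ S, a T ∉ evenNbrs E x) :
    HasPathDecomp E k 0 ∨ ∃ R, IsStarObstruction E S (starLeaves E (evenNbrs E x) c S) R := by
  have hB : (starLeaves E (evenNbrs E x) c S).Nonempty := by
    obtain ⟨v, hv⟩ := hne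
    by_cases hvS : evenClosedNbhd E v ∈ S
    · exact ⟨_, h.third_mem_starLeaves (hS hvS)⟩
    · exact ⟨v, mem_starLeaves.2 ⟨hv, fun h' => absurd h' hvS⟩⟩
  refine ((h.isOddStar hE hT hx hS ha).hasPathDecomp_or hE hT ih hB
    (heven.imp_right fun ha' => Finset.forall_mem_image.2 ha')).imp_right ?_
  rintro ⟨R, hRB, hR, hRcard, hRN⟩
  refine ⟨R, hRB, hR, hRcard, fun r hr hrS => ?_, fun r hr => (hRN r hr).1, fun r hr =>
    (hRN r hr).2.mono_right Finset.subset_union_left⟩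
  have hrc := (mem_starLeaves.1 (hRB hr)).2 hrS
  have har : a (evenClosedNbhd E r) ∈ evenNbrs E r :=
    h.mem_evenNbrs_of_mem (hS hrS) (self_mem_evenClosedNbhd E r) (h.fst_mem (hS hrS))
      fun h' => h.fst_ne_third _ (hS hrS) (h'.trans hrc)
  exact Finset.disjoint_left.1 (hRN r hr).2 har (Finset.mem_union_right _
    (Finset.mem_image_of_mem _ (Finset.mem_image_of_mem _ hrS)))

namespace IsStarObstruction

variable (h : IsStarObstruction E S B R)
include h

lemma eq_of_evenClosedNbhd_eq {r s : V} (hr : r ∈ R) (hs : s ∈ R)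
    (hrs : evenClosedNbhd E r = evenClosedNbhd E s) : r = s := by
  by_contra hne
  exact Finset.disjoint_left.1 (h.disjoint r hr)
    (mem_evenNbrs_of_evenClosedNbhd_eq hrs (Ne.symm hne)) hs

lemma sum_card_evenNbrs_inter_le (hT : IsTriangular E) (hB : ∀ v ∈ B, parity E v = 0) :
    ∑ r ∈ R, (evenNbrs E r ∩ B).card ≤ B.card - R.card := by
  rw [← Finset.card_biUnion, ← Finset.card_sdiff_of_subset h.subset]
  · refine Finset.card_le_card (Finset.biUnion_subset.2 fun r hr w hw => ?_)
    obtain ⟨hw, hwB⟩ := Finset.mem_inter.1 hw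
    exact Finset.mem_sdiff.2 ⟨hwB, Finset.disjoint_left.1 (h.disjoint r hr) hw⟩
  · refine fun r hr s hs hrs => Finset.disjoint_left.2 fun w hwr hws => hrs ?_
    exact h.eq_of_evenClosedNbhd_eq hr hs <|
      (hT.evenClosedNbhd_eq r (hB r (h.subset hr)) w (Finset.mem_inter.1 hwr).1).symm.trans
        (hT.evenClosedNbhd_eq s (hB s (h.subset hs)) w (Finset.mem_inter.1 hws).1)

end IsStarObstruction

lemma IsTriangular.evenNbrs_subset_starLeaves (hT : IsTriangular E) (hv : parity E v = 0)
    (hvN : v ∈ N) (hvT : evenClosedNbhd E v ∉ partialTriangles E N)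
    (hS : S ⊆ partialTriangles E N) : evenNbrs E v ⊆ starLeaves E N c S := by
  intro w hw
  refine hT.mem_starLeaves_of_mem_evenNbrs hv (fun h => hvT (hS h)) hw ?_
  by_contra hwN
  exact hvT (evenClosedNbhd_mem_partialTriangles hvN fun h =>
    hwN (h (evenNbrs_subset_evenClosedNbhd E v hw)))

lemma IsTriangleLabelling.card_starLeaves_erase (h : IsTriangleLabelling E N a b c)
    (hTN : T ∈ partialTriangles E N) (ha : a T ∈ N) :
    (starLeaves E N c ((partialTriangles E N).erase T)).card =
      (starLeaves E N c (partialTriangles E N)).card + 1 := by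
  have haT := h.evenClosedNbhd_eq T hTN _ (h.fst_mem hTN)
  have hac := h.fst_ne_third T hTN
  rw [← Finset.card_insert_of_notMem (a := a T) (by rw [mem_starLeaves]; grind)]
  congr 1
  ext v
  have hv (hvT : evenClosedNbhd E v = T) : v = a T ∨ v = b T ∨ v = c T :=
    h.eq_or hTN (hvT ▸ self_mem_evenClosedNbhd E v)
  have hb := h.snd_notMem T hTN
  rw [Finset.mem_insert, mem_starLeaves, mem_starLeaves, Finset.mem_erase]
  grind

lemma IsTriangleLabelling.exists_subset_of_isStarObstruction (h : IsTriangleLabelling E N a b c)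
    (hE : Admissible E) (hT : IsTriangular E) (hN : ∀ v ∈ N, parity E v = 0)
    (hR : IsStarObstruction E (partialTriangles E N)
      (starLeaves E N c (partialTriangles E N)) R)
    (heven : Even (starLeaves E N c (partialTriangles E N)).card ∨
      ∀ T ∈ partialTriangles E N, a T ∉ N) :
    ∃ v ∈ N, N ⊆ evenClosedNbhd E v ∧ 2 ≤ N.card := by
  set B := starLeaves E N c (partialTriangles E N)
  have hBN : B ⊆ N := starLeaves_subset E N c _
  have hnbrs {r} (hr : r ∈ R) : evenNbrs E r ⊆ B :=
    hT.evenNbrs_subset_starLeaves (hN r (hBN (hR.subset hr))) (hBN (hR.subset hr))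
      (hR.notMem r hr) subset_rfl
  have hsum := hR.sum_card_evenNbrs_inter_le hT fun v hv => hN v (hBN hv)
  rw [Finset.sum_congr rfl fun r hr => by
    rw [Finset.inter_eq_left.2 (hnbrs hr), hR.card_evenNbrs r hr], Finset.sum_const,
    smul_eq_mul] at hsum
  have hcard := hR.card_eq
  have hpos := hR.nonempty.card_pos
  have hB : B.card = 3 := by lia
  obtain ⟨r, hr⟩ := hR.nonempty
  have hBr : evenClosedNbhd E r = B :=
    Finset.eq_of_subset_of_card_le (Finset.insert_subset (hR.subset hr) (hnbrs hr))
      (by rw [hE.card_evenClosedNbhd, hR.card_evenNbrs r hr, hB])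
  have ha := heven.resolve_left (by rw [hB]; decide)
  refine ⟨r, hBN (hR.subset hr), fun v hv => ?_, by grind [Finset.card_le_card hBN]⟩
  rw [hBr]
  refine (Finset.mem_union.1 (h.subset_starLeaves_union subset_rfl hv)).resolve_right fun hva => ?_
  obtain ⟨T, hTN, rfl⟩ := Finset.mem_image.1 hva
  exact ha T hTN hv

lemma IsTriangleLabelling.evenNbrs_inter_nonempty (h : IsTriangleLabelling E N a b c)
    (hTN : T ∈ partialTriangles E N) (ha : a T ∈ B) (hc : c T ∈ B) (hv : v ∈ T) :
    (evenNbrs E v ∩ B).Nonempty := by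
  have hmem {w} (hw : w ∈ T) (hwB : w ∈ B) (hwv : w ≠ v) : (evenNbrs E v ∩ B).Nonempty :=
    ⟨w, Finset.mem_inter.2 ⟨h.mem_evenNbrs_of_mem hTN hv hw hwv, hwB⟩⟩
  by_cases hva : a T = v
  · exact hmem (h.third_mem_self hTN) hc (hva ▸ (h.fst_ne_third T hTN).symm)
  · exact hmem (h.fst_mem hTN) ha hva

lemma IsTriangleLabelling.evenClosedNbhd_eq_of_isStarObstruction_erase
    (h : IsTriangleLabelling E N a b c) (hT : IsTriangular E) (hN : ∀ v ∈ N, parity E v = 0)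
    (hTN : T ∈ partialTriangles E N) (ha : a T ∈ starLeaves E N c ((partialTriangles E N).erase T))
    (hR : IsStarObstruction E ((partialTriangles E N).erase T)
      (starLeaves E N c ((partialTriangles E N).erase T)) R)
    (heven : Even (starLeaves E N c ((partialTriangles E N).erase T)).card) {r : V} (hr : r ∈ R) :
    evenClosedNbhd E r = T := by
  set S := (partialTriangles E N).erase T
  set B := starLeaves E N c S
  have hBN : B ⊆ N := starLeaves_subset E N c _
  have htwo {s} (hs : s ∈ R) (hsT : evenClosedNbhd E s ≠ T) : (evenNbrs E s ∩ B).card = 2 := by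
    have hsN := hBN (hR.subset hs)
    rw [Finset.inter_eq_left.2 (hT.evenNbrs_subset_starLeaves (hN s hsN) hsN
      (fun h' => hR.notMem s hs (Finset.mem_erase.2 ⟨hsT, h'⟩)) (Finset.erase_subset T _)),
      hR.card_evenNbrs s hs]
  have hone : ∀ s ∈ R, 1 ≤ (evenNbrs E s ∩ B).card := fun s hs => by
    by_cases hsT : evenClosedNbhd E s = T
    · exact (h.evenNbrs_inter_nonempty hTN ha (h.third_mem_starLeaves hTN)
        (hsT ▸ self_mem_evenClosedNbhd E s)).card_pos
    · exact (htwo hs hsT).symm ▸ one_le_two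
  have hsum := hR.sum_card_evenNbrs_inter_le hT fun v hv => hN v (hBN hv)
  by_contra hrT
  have hlt := Finset.sum_lt_sum hone ⟨r, hr, (htwo hr hrT).symm ▸ one_lt_two⟩
  rw [Finset.sum_const, smul_eq_mul, mul_one] at hlt
  have hcard := hR.card_eq
  grind

lemma IsTriangleLabelling.exists_subset_of_isStarObstruction_erase
    (h : IsTriangleLabelling E N a b c) (hT : IsTriangular E) (hN : ∀ v ∈ N, parity E v = 0)
    (hTN : T ∈ partialTriangles E N) (ha : a T ∈ N)
    (hR : IsStarObstruction E ((partialTriangles E N).erase T)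
      (starLeaves E N c ((partialTriangles E N).erase T)) R)
    (heven : Even (starLeaves E N c ((partialTriangles E N).erase T)).card) :
    ∃ v ∈ N, N ⊆ evenClosedNbhd E v ∧ 2 ≤ N.card := by
  have hcB := h.third_mem_starLeaves (S := (partialTriangles E N).erase T) hTN
  have haB : a T ∈ starLeaves E N c ((partialTriangles E N).erase T) := by
    rw [mem_starLeaves, h.evenClosedNbhd_eq T hTN _ (h.fst_mem hTN)]
    exact ⟨ha, fun h' => absurd h' (Finset.notMem_erase T _)⟩
  have hclass {r} (hr : r ∈ R) : evenClosedNbhd E r = T :=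
    h.evenClosedNbhd_eq_of_isStarObstruction_erase hT hN hTN haB hR heven hr
  have hac := Finset.card_pair (h.fst_ne_third T hTN)
  have hBac : {a T, c T} = starLeaves E N c ((partialTriangles E N).erase T) := by
    refine Finset.eq_of_subset_of_card_le
      (Finset.insert_subset haB (Finset.singleton_subset_iff.2 hcB)) ?_
    have hR1 : R.card ≤ 1 := Finset.card_le_one.2 fun r hr s hs =>
      hR.eq_of_evenClosedNbhd_eq hr hs ((hclass hr).trans (hclass hs).symm)
    have hcard := hR.card_eq
    grind
  refine ⟨a T, ha, fun v hv => ?_, hac ▸ Finset.card_le_card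
    (Finset.insert_subset ha (Finset.singleton_subset_iff.2 (h.third_mem T hTN)))⟩
  rw [h.evenClosedNbhd_eq T hTN _ (h.fst_mem hTN)]
  by_contra hvT
  have hBT {w} (hw : w ∈ starLeaves E N c ((partialTriangles E N).erase T)) : w ∈ T := by
    rcases Finset.mem_insert.1 (hBac ▸ hw) with rfl | hw
    · exact h.fst_mem hTN
    · exact Finset.mem_singleton.1 hw ▸ h.third_mem_self hTN
  by_cases hv' : evenClosedNbhd E v ∈ partialTriangles E N
  · have hc := hBT (h.third_mem_starLeaves hv')
    have hvT' := (h.evenClosedNbhd_eq _ hv' _ (h.third_mem_self hv')).symm.trans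
      (h.evenClosedNbhd_eq T hTN _ hc)
    exact hvT (hvT' ▸ self_mem_evenClosedNbhd E v)
  · exact hvT (hBT (mem_starLeaves.2 ⟨hv, fun h' => absurd (Finset.mem_of_mem_erase h') hv'⟩))

theorem IsTriangular.hasPathDecomp_or_exists_subset (hT : IsTriangular E) (hE : Admissible E)
    (ih : HasPathDecompBelow E k) (hx : parity E x = 1) (hne : (evenNbrs E x).Nonempty) :
    HasPathDecomp E k 0 ∨ ∃ v ∈ evenNbrs E x, evenNbrs E x ⊆ evenClosedNbhd E v ∧
      2 ≤ (evenNbrs E x).card := by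
  have : Nonempty V := ⟨x⟩
  have hN : ∀ v ∈ evenNbrs E x, parity E v = 0 := fun v hv => (mem_evenNbrs.1 hv).2
  obtain ⟨a, b, c, h⟩ := hT.exists_isTriangleLabelling hE hN
  by_cases heven : Even (starLeaves E (evenNbrs E x) c (partialTriangles E (evenNbrs E x))).card ∨
      ∀ T ∈ partialTriangles E (evenNbrs E x), a T ∉ evenNbrs E x
  · exact (h.hasPathDecomp_or hE hT ih hx hne subset_rfl (fun T hTN h' => absurd hTN h')
      heven).imp_right fun ⟨R, hR⟩ => h.exists_subset_of_isStarObstruction hE hT hN hR heven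
  · push Not at heven
    obtain ⟨hodd, T, hTN, ha⟩ := heven
    have heven' := (Nat.not_even_iff_odd.1 hodd).add_one
    rw [← h.card_starLeaves_erase hTN ha] at heven'
    exact (h.hasPathDecomp_or hE hT ih hx hne (Finset.erase_subset T _) (by grind)
      (.inl heven')).imp_right fun ⟨R, hR⟩ =>
        h.exists_subset_of_isStarObstruction_erase hT hN hTN ha hR heven'

end Attachment

/-! ### Adjacent odd vertices -/

section Gadget

variable [DecidableEq V] [Fintype V] {E : Finset (Sym2 V)} {T : Finset V} {g : V → ℕ}
  {a b c u v : V} {k d : ℕ}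

/-- The end counts `g` after all ends at `T` have been given up and `d` ends at `u` gained. -/
def collectEnds (g : V → ℕ) (u : V) (T : Finset V) (d : ℕ) (v : V) : ℕ :=
  if v = u then g u + d else if v ∈ T then 0 else g v

/-- A set `F` of edges joining the odd vertex `u` to a set `T` of even vertices, or inside `T`,
such that `T` contains the even neighbours of `u` and of its own vertices. Deleting `F` makes the
vertices of `T` odd; adding it back uses up the path ends at `T` and creates `d` path ends at `u`.
The value `d = 0` is reserved for the empty gadget. -/
structure IsGadget (E : Finset (Sym2 V)) (u : V) (T : Finset V) (F : Finset (Sym2 V)) (d : ℕ) :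
    Prop where
  subset : F ⊆ E
  parity_center : parity E u = 1
  parity_eq_zero : ∀ r ∈ T, parity E r = 0
  evenNbrs_subset : ∀ v ∈ insert u T, evenNbrs E v ⊆ T
  mem_insert : ∀ v w, s(v, w) ∈ F → v ∈ insert u T
  parity_edges_center : parity F u = d
  parity_edges : ∀ r ∈ T, parity F r = 1
  eq_empty : d = 0 → T = ∅
  hasPathDecomp_union : ∀ (E₀ : Finset (Sym2 V)) (k : ℕ) (g : V → ℕ), E₀ ⊆ E → Disjoint E₀ F →
    HasPathDecomp E₀ k g → (∀ v ∈ insert u T, 1 ≤ g v) →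
    (∀ v ∈ insert u T, ∀ w, s(v, w) ∈ E₀ → 1 ≤ g w) →
    HasPathDecomp (E₀ ∪ F) k (collectEnds g u T d)

lemma IsGadget.center_notMem {F : Finset (Sym2 V)} (h : IsGadget E u T F d) : u ∉ T := fun hu =>
  zero_ne_one ((h.parity_eq_zero u hu).symm.trans h.parity_center)

lemma isGadget_empty (hu : parity E u = 1) (h : evenNbrs E u = ∅) : IsGadget E u ∅ ∅ 0 where
  subset := Finset.empty_subset _
  parity_center := hu
  parity_eq_zero := by simp
  evenNbrs_subset := by simp [h]
  mem_insert := by simp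
  parity_edges_center := by simp [parity, edgeDeg]
  parity_edges := by simp
  eq_empty _ := rfl
  hasPathDecomp_union E₀ k g _ _ h _ _ := by
    rw [Finset.union_empty]
    exact h.mono fun v => by rw [collectEnds]; grind

lemma IsTriangular.evenNbrs_subset_of_mem_insert (hT : IsTriangular E) (hv : parity E v = 0)
    (hu : evenNbrs E u ⊆ evenClosedNbhd E v) :
    ∀ w ∈ insert u (evenClosedNbhd E v), evenNbrs E w ⊆ evenClosedNbhd E v := by
  refine (Finset.forall_mem_insert _ _ _).2 ⟨hu, fun w hw => ?_⟩
  rw [← hT.evenClosedNbhd_eq_of_mem hv hw]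
  exact evenNbrs_subset_evenClosedNbhd E w

lemma notMem_evenClosedNbhd_of_parity_eq_one (hu : parity E u = 1) (hv : parity E v = 0) :
    u ∉ evenClosedNbhd E v := fun h =>
  zero_ne_one ((parity_eq_zero_of_mem_evenClosedNbhd hv h).symm.trans hu)

lemma isGadget_star (hE : Admissible E) (hT : IsTriangular E) (hu : parity E u = 1)
    (hv : parity E v = 0) (hN : evenNbrs E u = evenClosedNbhd E v)
    (h3 : (evenClosedNbhd E v).card = 3) :
    IsGadget E u (evenClosedNbhd E v) (starEdges u (evenClosedNbhd E v)) 1 := by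
  have huT := notMem_evenClosedNbhd_of_parity_eq_one hu hv
  refine ⟨?_, hu, fun r hr => parity_eq_zero_of_mem_evenClosedNbhd hv hr,
    hT.evenNbrs_subset_of_mem_insert hv hN.le, fun v w hvw => ?_, ?_, fun r hr => ?_, by simp, ?_⟩
  · refine Finset.image_subset_iff.2 fun r hr => ?_
    exact (mem_evenNbrs.1 (hN.symm ▸ hr)).1
  · by_cases hvu : v = u
    · exact Finset.mem_insert.2 (.inl hvu)
    · exact Finset.mem_insert_of_mem ((mem_starEdges hvu).1 hvw).2
  · rw [parity, edgeDeg_starEdges huT, if_pos rfl, h3]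
  · rw [parity, edgeDeg_starEdges huT, if_neg (ne_of_mem_of_not_mem hr huT), if_pos hr]
  · intro E₀ k g hE₀ hdisj h hg hgN
    rw [Finset.forall_mem_insert] at hg hgN
    refine h.add_three h3 huT
      (fun r hr h => Finset.disjoint_left.1 hdisj h (mem_starEdges_self.2 hr)) hg.1 hg.2 hgN.1
      (fun r hr => ?_) (by simp [collectEnds]) (fun r hr => by rw [collectEnds]; grind)
      (fun w hw => by rw [collectEnds]; grind)
    refine (Finset.card_le_card (t := (evenClosedNbhd E v).erase r) fun w hw => ?_).trans
      (by rw [Finset.card_erase_of_mem hr, h3])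
    rw [Finset.mem_filter_univ] at hw
    have hwr : w ≠ r := by
      rintro rfl
      exact hE.loopless w (hE₀ hw.1)
    have := hgN.2 r hr w hw.1
    grind

omit [Fintype V] in
lemma HasPathDecomp.add_pair [Finite V] (h : HasPathDecomp E k g) (hua : u ≠ a) (hub : u ≠ b)
    (huc : u ≠ c) (hab : a ≠ b) (hbc : b ≠ c) (huc' : s(u, c) ∉ E) (hab' : s(a, b) ∉ E)
    (hub' : s(u, b) ∉ E) (hgb : 1 ≤ g b) (hgc : 1 ≤ g c) (hNa : ∀ w, s(a, w) ∈ E → 1 ≤ g w)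
    (hNu : ∀ w, s(u, w) ∈ E → 1 ≤ g w) :
    HasPathDecomp (E ∪ {s(u, c), s(a, b)}) k (collectEnds g u {a, b, c} 1) := by
  have := Fintype.ofFinite V
  have h' : HasPathDecomp (insert s(a, b) E) k fun v => if v = b then 0 else g v := by
    refine h.insert_edge hab hab' ?_ fun v => by grind
    rw [Finset.card_eq_zero.2 (Finset.eq_empty_of_forall_notMem fun w hw => ?_)]
    · exact hgb
    · rw [mem_zeroNbrs] at hw
      grind
  rw [Finset.union_comm, Finset.insert_union, Finset.singleton_union]
  refine h'.insert_edge huc ?_ ?_ fun v => by rw [collectEnds]; grind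
  · rw [Finset.mem_insert, Sym2.eq_iff]
    grind
  · rw [Finset.card_eq_zero.2 (Finset.eq_empty_of_forall_notMem fun w hw => ?_), if_neg hbc.symm]
    · exact hgc
    · rw [mem_zeroNbrs, Finset.mem_insert, Sym2.eq_iff] at hw
      grind

lemma isGadget_pair (hT : IsTriangular E) (hu : parity E u = 1) (ha : parity E a = 0)
    (hT' : evenClosedNbhd E a = {a, b, c}) (hab : a ≠ b) (hac : a ≠ c) (hbc : b ≠ c)
    (hNu : evenNbrs E u = {a, c}) :
    IsGadget E u (evenClosedNbhd E a) {s(u, c), s(a, b)} 1 := by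
  have hparity (r) (hr : r ∈ evenClosedNbhd E a) : parity E r = 0 :=
    parity_eq_zero_of_mem_evenClosedNbhd ha hr
  have hb : b ∈ evenClosedNbhd E a := by simp [hT']
  have huT := notMem_evenClosedNbhd_of_parity_eq_one hu ha
  have huc : s(u, c) ∈ E := (mem_evenNbrs.1 (by simp [hNu] : c ∈ evenNbrs E u)).1
  have hab' : s(a, b) ∈ E := (mem_evenNbrs.1 (Finset.mem_of_mem_insert_of_ne hb hab.symm)).1
  have hub : s(u, b) ∉ E := fun h => by
    have : b ∈ evenNbrs E u := mem_evenNbrs.2 ⟨h, hparity b hb⟩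
    grind
  have hclosed := hT.evenNbrs_subset_of_mem_insert ha (hNu.trans_subset (by grind))
  rw [hT'] at hparity huT hclosed ⊢
  have hne : s(u, c) ∉ ({s(a, b)} : Finset (Sym2 V)) := by
    rw [Finset.mem_singleton, Sym2.eq_iff]
    grind
  refine ⟨Finset.insert_subset huc (Finset.singleton_subset_iff.2 hab'), hu, hparity, hclosed,
    fun v w hvw => ?_, ?_, fun r hr => ?_, by simp, fun E₀ k g hE₀ hdisj h hg hgN => ?_⟩
  · rw [Finset.mem_insert, Finset.mem_singleton, Sym2.eq_iff, Sym2.eq_iff] at hvw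
    grind
  · rw [parity, edgeDeg_insert hne, edgeDeg_singleton]
    grind
  · rw [parity, edgeDeg_insert hne, edgeDeg_singleton]
    grind
  · exact h.add_pair (by grind) (by grind) (by grind) hab hbc
      (fun h => Finset.disjoint_left.1 hdisj h (by simp))
      (fun h => Finset.disjoint_left.1 hdisj h (by simp)) (fun h => hub (hE₀ h))
      (hg b (by simp)) (hg c (by simp)) (hgN a (by simp)) (hgN u (by simp))

theorem IsTriangular.exists_isGadget (hT : IsTriangular E) (hE : Admissible E)
    (hu : parity E u = 1) (hv : v ∈ evenNbrs E u) (hsub : evenNbrs E u ⊆ evenClosedNbhd E v)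
    (htwo : 2 ≤ (evenNbrs E u).card) : ∃ F, IsGadget E u (evenClosedNbhd E v) F 1 := by
  have hv0 := (mem_evenNbrs.1 hv).2
  have hthree : (evenClosedNbhd E v).card = 3 := by
    have := Finset.card_le_card hsub
    have := hT.card v hv0
    have := hE.card_evenClosedNbhd v
    grind
  by_cases hfull : evenNbrs E u = evenClosedNbhd E v
  · exact ⟨_, isGadget_star hE hT hu hv0 hfull hthree⟩
  have hN2 : (evenNbrs E u).card = 2 := by
    have := Finset.card_lt_card (Finset.ssubset_iff_subset_ne.2 ⟨hsub, hfull⟩)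
    lia
  obtain ⟨c, hc⟩ : ∃ c, (evenNbrs E u).erase v = {c} := by
    rw [← Finset.card_eq_one, Finset.card_erase_of_mem hv, hN2]
  obtain ⟨b, hb⟩ : ∃ b, evenClosedNbhd E v \ evenNbrs E u = {b} := by
    rw [← Finset.card_eq_one, Finset.card_sdiff_of_subset hsub, hthree, hN2]
  have hNu : evenNbrs E u = {v, c} := by rw [← hc, Finset.insert_erase hv]
  have hcv := Finset.mem_erase.1 (hc ▸ Finset.mem_singleton_self c)
  have hbu := Finset.mem_sdiff.1 (hb ▸ Finset.mem_singleton_self b)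
  refine ⟨_, isGadget_pair (b := b) (c := c) hT hu hv0 ?_ ?_ hcv.1.symm ?_ hNu⟩
  · rw [← Finset.sdiff_union_of_subset hsub, hb, hNu]
    grind
  · exact ne_of_mem_of_not_mem hv hbu.2
  · exact (ne_of_mem_of_not_mem hcv.2 hbu.2).symm

end Gadget

section GadgetPair

variable [DecidableEq V] [Fintype V] {E Fy Fz : Finset (Sym2 V)} {S T : Finset V}
  {r v w y z : V} {d e k : ℕ}

/-- Two disjoint gadgets whose centers `y` and `z` are adjacent. -/
structure IsGadgetPair (E : Finset (Sym2 V)) (y z : V) (S T : Finset V) (Fy Fz : Finset (Sym2 V))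
    (d e : ℕ) : Prop where
  ne : y ≠ z
  adj : s(y, z) ∈ E
  left : IsGadget E y S Fy d
  right : IsGadget E z T Fz e
  disjoint : Disjoint S T

/-- The edges of two gadgets together with the edge between their centers. -/
def bridge (y z : V) (Fy Fz : Finset (Sym2 V)) : Finset (Sym2 V) := insert s(y, z) (Fy ∪ Fz)

omit [Fintype V] in
lemma bridge_comm (y z : V) (Fy Fz : Finset (Sym2 V)) : bridge y z Fy Fz = bridge z y Fz Fy := by
  rw [bridge, bridge, Sym2.eq_swap, Finset.union_comm]

namespace IsGadgetPair

variable (h : IsGadgetPair E y z S T Fy Fz d e)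
include h

lemma symm : IsGadgetPair E z y T S Fz Fy e d :=
  ⟨h.ne.symm, Sym2.eq_swap ▸ h.adj, h.right, h.left, h.disjoint.symm⟩

lemma left_notMem : y ∉ T := fun hy =>
  zero_ne_one ((h.right.parity_eq_zero y hy).symm.trans h.left.parity_center)

lemma right_notMem : z ∉ S := h.symm.left_notMem

lemma disjoint_insert : Disjoint (insert y S) (insert z T) := by
  rw [Finset.disjoint_insert_left, Finset.disjoint_insert_right, Finset.mem_insert, not_or]
  exact ⟨⟨h.ne, h.left_notMem⟩, h.right_notMem, h.disjoint⟩

lemma notMem_right (hv : v ∈ insert y S) : s(v, w) ∉ Fz := fun hvw =>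
  Finset.disjoint_left.1 h.disjoint_insert hv (h.right.mem_insert v w hvw)

lemma disjoint_edges : Disjoint Fy Fz := by
  refine Finset.disjoint_left.2 fun e => ?_
  induction e with
  | _ v w => exact fun hvw => h.notMem_right (h.left.mem_insert v w hvw)

lemma notMem_union : s(y, z) ∉ Fy ∪ Fz := by
  rw [Finset.mem_union, not_or]
  exact ⟨Sym2.eq_swap (a := y) ▸ h.symm.notMem_right (Finset.mem_insert_self z T),
    h.notMem_right (Finset.mem_insert_self y S)⟩

lemma bridge_subset : bridge y z Fy Fz ⊆ E :=
  Finset.insert_subset h.adj (Finset.union_subset h.left.subset h.right.subset)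

lemma mem_or_mem_of_mem_bridge (hvw : s(v, w) ∈ bridge y z Fy Fz) :
    v ∈ insert y S ∨ v ∈ insert z T := by
  rw [bridge, Finset.mem_insert, Finset.mem_union, Sym2.eq_iff] at hvw
  rcases hvw with (hv | hv) | hvw | hvw
  · exact .inl (Finset.mem_insert.2 (.inl hv.1))
  · exact .inr (Finset.mem_insert.2 (.inl hv.1))
  · exact .inl (h.left.mem_insert v w hvw)
  · exact .inr (h.right.mem_insert v w hvw)

lemma edgeDeg_bridge (hv : v ∈ insert y S) :
    edgeDeg (bridge y z Fy Fz) v = edgeDeg Fy v + if v = y then 1 else 0 := by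
  have hvz : v ≠ z := fun hvz => Finset.disjoint_left.1 h.disjoint_insert hv
    (Finset.mem_insert.2 (.inl hvz))
  rw [bridge, edgeDeg_insert h.notMem_union, edgeDeg_union h.disjoint_edges,
    edgeDeg_eq_zero fun w => h.notMem_right hv]
  simp only [hvz, or_false, add_zero]

lemma parity_sdiff_left : parity (E \ bridge y z Fy Fz) y = d := by
  have hcenter := h.left.parity_center
  have hedges := h.left.parity_edges_center
  rw [parity_sdiff h.bridge_subset, h.edgeDeg_bridge (Finset.mem_insert_self y S), if_pos rfl]
  rw [parity] at hedges
  lia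

lemma parity_sdiff_of_mem_left (hr : r ∈ S) : parity (E \ bridge y z Fy Fz) r = 1 := by
  have hr0 := h.left.parity_eq_zero r hr
  have hedges := h.left.parity_edges r hr
  have hry : r ≠ y := ne_of_mem_of_not_mem hr h.left.center_notMem
  rw [parity_sdiff h.bridge_subset, h.edgeDeg_bridge (Finset.mem_insert_of_mem hr), if_neg hry]
  rw [parity] at hedges
  lia

lemma parity_sdiff_right : parity (E \ bridge y z Fy Fz) z = e := by
  rw [bridge_comm]
  exact h.symm.parity_sdiff_left

lemma parity_sdiff_of_mem_right (hr : r ∈ T) : parity (E \ bridge y z Fy Fz) r = 1 := by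
  rw [bridge_comm]
  exact h.symm.parity_sdiff_of_mem_left hr

lemma parity_sdiff_bridge_of_notMem (hv : v ∉ insert y S) (hv' : v ∉ insert z T) :
    parity (E \ bridge y z Fy Fz) v = parity E v :=
  parity_sdiff_of_notMem h.bridge_subset fun _ hvw =>
    (h.mem_or_mem_of_mem_bridge hvw).elim hv hv'

lemma one_le_parity_sdiff_of_mem_left (hE : Admissible E) (hv : v ∈ insert y S)
    (hvw : s(v, w) ∈ E \ bridge y z Fy Fz) : 1 ≤ parity (E \ bridge y z Fy Fz) w := by
  obtain ⟨hvwE, hvwF⟩ := Finset.mem_sdiff.1 hvw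
  have hv0 (hvS : v ∈ S) : parity E v = 0 := h.left.parity_eq_zero v hvS
  by_contra! h0
  rw [Nat.lt_one_iff] at h0
  have hwS : w ∉ S := fun hw => zero_ne_one (h0.symm.trans (h.parity_sdiff_of_mem_left hw))
  have hwT : w ∉ T := fun hw => zero_ne_one (h0.symm.trans (h.parity_sdiff_of_mem_right hw))
  rcases eq_or_ne w y with rfl | hwy
  · obtain rfl := h.left.eq_empty (h.parity_sdiff_left.symm.trans h0)
    obtain rfl := Finset.mem_singleton.1 hv
    exact hE.loopless v hvwE
  rcases eq_or_ne w z with rfl | hwz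
  · obtain rfl := h.right.eq_empty (h.parity_sdiff_right.symm.trans h0)
    rcases Finset.mem_insert.1 hv with rfl | hvS
    · exact hvwF (Finset.mem_insert_self _ _)
    · exact Finset.notMem_empty v (h.right.evenNbrs_subset w (Finset.mem_insert_self w ∅)
        (mem_evenNbrs.2 ⟨Sym2.eq_swap ▸ hvwE, hv0 hvS⟩))
  · rw [h.parity_sdiff_bridge_of_notMem (by grind) (by grind)] at h0
    exact hwS (h.left.evenNbrs_subset v hv (mem_evenNbrs.2 ⟨hvwE, h0⟩))

lemma one_le_parity_sdiff_of_mem_right (hE : Admissible E) (hv : v ∈ insert z T)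
    (hvw : s(v, w) ∈ E \ bridge y z Fy Fz) : 1 ≤ parity (E \ bridge y z Fy Fz) w := by
  rw [bridge_comm] at hvw ⊢
  exact h.symm.one_le_parity_sdiff_of_mem_left hE hv hvw

lemma admissible (hE : Admissible E) : Admissible (E \ bridge y z Fy Fz) := by
  refine hE.sdiff h.bridge_subset fun v w hvw => ?_
  have hempty : evenNbrs (E \ bridge y z Fy Fz) v = ∅ :=
    Finset.eq_empty_of_forall_notMem fun u hu => by
      obtain ⟨hvu, hu0⟩ := mem_evenNbrs.1 hu
      refine Nat.one_le_iff_ne_zero.1 ?_ hu0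
      exact (h.mem_or_mem_of_mem_bridge hvw).elim
        (fun hv => h.one_le_parity_sdiff_of_mem_left hE hv hvu)
        fun hv => h.one_le_parity_sdiff_of_mem_right hE hv hvu
  simp [hempty]

lemma notMem_of_adj_left (hv : v ∈ insert y S) (hvw : s(v, w) ∈ E) : w ∉ T := fun hw =>
  Finset.disjoint_left.1 h.disjoint (h.left.evenNbrs_subset v hv
    (mem_evenNbrs.2 ⟨hvw, h.right.parity_eq_zero w hw⟩)) hw

end IsGadgetPair

namespace IsGadgetPair

variable (h : IsGadgetPair E y z S T Fy Fz d 1)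
include h

lemma hasPathDecomp_insert_edge (hE : Admissible E)
    (hdec : HasPathDecomp (E \ bridge y z Fy Fz) k (parity (E \ bridge y z Fy Fz))) :
    HasPathDecomp (insert s(y, z) (E \ bridge y z Fy Fz ∪ Fz)) k
      (collectEnds (parity (E \ bridge y z Fy Fz)) y T 1) := by
  have hz := h.parity_sdiff_right
  have hy := h.left_notMem
  have hFz : Disjoint (E \ bridge y z Fy Fz) Fz := Finset.sdiff_disjoint.mono_right
    (Finset.subset_union_right.trans (Finset.subset_insert _ _))
  refine (h.right.hasPathDecomp_union _ k _ Finset.sdiff_subset hFz hdec ?_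
    fun v hv w hvw => h.one_le_parity_sdiff_of_mem_right hE hv hvw).insert_edge h.ne ?_ ?_
    fun v => by simp only [collectEnds]; grind
  · exact (Finset.forall_mem_insert _ _ _).2
      ⟨hz.ge, fun r hr => (h.parity_sdiff_of_mem_right hr).ge⟩
  · rw [Finset.mem_union, not_or]
    exact ⟨fun h' => (Finset.mem_sdiff.1 h').2 (Finset.mem_insert_self _ _),
      h.notMem_right (Finset.mem_insert_self y S)⟩
  · rw [Finset.card_eq_zero.2 (Finset.eq_empty_of_forall_notMem fun w hw => ?_)]
    · rw [collectEnds, if_pos rfl]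
      exact Nat.succ_pos _
    · have hyS := Finset.mem_insert_self y S
      obtain ⟨hyw, hw0⟩ := mem_zeroNbrs.1 hw
      replace hyw := (Finset.mem_union.1 hyw).resolve_right (h.notMem_right hyS)
      have hpos := h.one_le_parity_sdiff_of_mem_left hE hyS hyw
      have hwT := h.notMem_of_adj_left hyS (Finset.mem_sdiff.1 hyw).1
      rw [collectEnds] at hw0
      grind

lemma one_le_collectEnds (hE : Admissible E) (hv : v ∈ insert y S)
    (hvw : s(v, w) ∈ insert s(y, z) (E \ bridge y z Fy Fz ∪ Fz)) :
    1 ≤ collectEnds (parity (E \ bridge y z Fy Fz)) y T 1 w := by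
  have hvw' := (Finset.mem_insert.1 hvw).imp_right fun h' =>
    (Finset.mem_union.1 h').resolve_right (h.notMem_right hv)
  have hwT : w ∉ T := h.notMem_of_adj_left hv
    (hvw'.elim (fun h' => h' ▸ h.adj) fun h' => (Finset.mem_sdiff.1 h').1)
  have hw : w = y ∨ 1 ≤ parity (E \ bridge y z Fy Fz) w := by
    rcases hvw' with hvw | hvw
    · rcases Sym2.eq_iff.1 hvw with ⟨-, rfl⟩ | ⟨-, rfl⟩
      exacts [.inr h.parity_sdiff_right.ge, .inl rfl]
    · exact .inr (h.one_le_parity_sdiff_of_mem_left hE hv hvw)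
  rw [collectEnds]
  grind

theorem hasPathDecomp (hE : Admissible E) (ih : HasPathDecompBelow E k) :
    HasPathDecomp E k 0 := by
  have hdec := h.hasPathDecomp_insert_edge hE
    (ih.sdiff h.bridge_subset ⟨_, Finset.mem_insert_self _ _⟩ (h.admissible hE))
  have hdisj : Disjoint (insert s(y, z) (E \ bridge y z Fy Fz ∪ Fz)) Fy := by
    rw [Finset.disjoint_insert_left, Finset.disjoint_union_left]
    exact ⟨fun h' => h.notMem_union (Finset.mem_union_left _ h'), Finset.sdiff_disjoint.mono_right
      (Finset.subset_union_left.trans (Finset.subset_insert _ _)), h.disjoint_edges.symm⟩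
  have hunion : insert s(y, z) (E \ bridge y z Fy Fz ∪ Fz) ∪ Fy = E := by
    rw [Finset.insert_union, Finset.union_assoc, ← Finset.union_insert, Finset.union_comm Fz,
      ← bridge, Finset.sdiff_union_of_subset h.bridge_subset]
  rw [← hunion]
  refine (h.left.hasPathDecomp_union _ k _ ?_ hdisj hdec ?_
    fun v hv w hvw => h.one_le_collectEnds hE hv hvw).mono fun _ => Nat.zero_le _
  · exact Finset.insert_subset h.adj (Finset.union_subset Finset.sdiff_subset h.right.subset)
  · refine (Finset.forall_mem_insert _ _ _).2 ⟨by simp [collectEnds], fun r hr => ?_⟩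
    rw [collectEnds, if_neg (ne_of_mem_of_not_mem hr h.left.center_notMem),
      if_neg (Finset.disjoint_left.1 h.disjoint hr), h.parity_sdiff_of_mem_left hr]

end IsGadgetPair

end GadgetPair

/-! ### The induction -/

section Induction

variable [DecidableEq V] {E : Finset (Sym2 V)} {k : ℕ} {v w x y z : V}

lemma even_sum_edgeDeg [Fintype V] (h : ∀ v, s(v, v) ∉ E) : Even (∑ v, edgeDeg E v) := by
  induction E using Finset.induction_on with
  | empty => simp [edgeDeg]
  | insert e E he ih =>
    obtain ⟨a, b⟩ := e
    have hab : a ≠ b := by rintro rfl; exact h a (Finset.mem_insert_self _ _)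
    have hpair : (Finset.univ.filter fun v => v = a ∨ v = b) = {a, b} := by
      ext v
      simp
    simp only [edgeDeg_insert he, Finset.sum_add_distrib]
    refine (ih fun v hv => h v (Finset.mem_insert_of_mem hv)).add ?_
    rw [← Finset.card_filter, hpair, Finset.card_pair hab]
    exact even_two

lemma even_sum_parity [Fintype V] (h : ∀ v, s(v, v) ∉ E) : Even (∑ v, parity E v) := by
  simpa only [Nat.even_iff, Finset.sum_nat_mod Finset.univ 2 (edgeDeg E), parity]
    using even_sum_edgeDeg h

lemma hasPathDecomp_of_forall_parity_ne_zero [Fintype V] (h : ∀ v, s(v, v) ∉ E)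
    (hodd : ∀ v w, s(v, w) ∈ E → parity E v ≠ 0) : HasPathDecomp E (Fintype.card V / 2) 0 := by
  obtain ⟨k, hk⟩ := even_sum_parity h
  have hpres : IsEndPrescription E k (parity E) := ⟨h, fun v => Nat.mod_mod _ _, by lia⟩
  have hle : ∑ v, parity E v ≤ Fintype.card V :=
    (Finset.sum_le_card_nsmul _ _ 1 fun v _ => Nat.lt_succ_iff.1 (Nat.mod_lt _ two_pos)).trans
      (by simp)
  obtain ⟨D, hD, hc, -⟩ := hpres.hasPathDecomp
    fun v ⟨hv, w, hw⟩ => absurd hv (hodd v w hw)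
  exact ⟨D, hD, by lia, fun _ => Nat.zero_le _⟩

variable [Fintype V]

/-- The structure left when no reduction applies: the components of the graph on the even vertices
are single vertices and triangles, every odd vertex with an even neighbour is attached to exactly
one such component, by at least two edges, and adjacent odd vertices are attached to the same
component, if any. -/
structure IsSETLike (E : Finset (Sym2 V)) : Prop extends IsTriangular E where
  evenNbrs_subset : ∀ x t, parity E x = 1 → t ∈ evenNbrs E x → evenNbrs E x ⊆ evenClosedNbhd E t
  two_le : ∀ x t, parity E x = 1 → t ∈ evenNbrs E x → 2 ≤ (evenNbrs E x).card
  exists_mem : ∀ y z t, parity E y = 1 → parity E z = 1 → s(y, z) ∈ E → t ∈ evenNbrs E z →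
    ∃ r ∈ evenNbrs E y, r ∈ evenClosedNbhd E t

/-- The even vertices of the component of `v` together with the odd vertices attached to them; for
a `IsSETLike` edge set this is a union of components. -/
def attachedSet (E : Finset (Sym2 V)) (v : V) : Set V :=
  {u | u ∈ evenClosedNbhd E v ∨ parity E u = 1 ∧ ∃ t ∈ evenNbrs E u, t ∈ evenClosedNbhd E v}

lemma IsTriangular.hasPathDecomp_or_evenNbrs_subset (hT : IsTriangular E) (hE : Admissible E)
    (ih : HasPathDecompBelow E k) (hx : parity E x = 1) (hv : v ∈ evenNbrs E x) :
    HasPathDecomp E k 0 ∨ evenNbrs E x ⊆ evenClosedNbhd E v ∧ 2 ≤ (evenNbrs E x).card := by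
  refine (hT.hasPathDecomp_or_exists_subset hE ih hx ⟨v, hv⟩).imp_right ?_
  rintro ⟨w, hw, hsub, h2⟩
  rw [hT.evenClosedNbhd_eq_of_mem (mem_evenNbrs.1 hw).2 (hsub hv)]
  exact ⟨hsub, h2⟩

lemma IsTriangular.hasPathDecomp_or_exists_mem (hT : IsTriangular E) (hE : Admissible E)
    (ih : HasPathDecompBelow E k) (hy : parity E y = 1) (hz : parity E z = 1)
    (hyz : s(y, z) ∈ E) (hv : v ∈ evenNbrs E z) :
    HasPathDecomp E k 0 ∨ ∃ w ∈ evenNbrs E y, w ∈ evenClosedNbhd E v := by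
  have hne : y ≠ z := by rintro rfl; exact hE.loopless y hyz
  refine or_iff_not_imp_left.2 fun hD => ?_
  obtain ⟨hsub, h2⟩ := (hT.hasPathDecomp_or_evenNbrs_subset hE ih hz hv).resolve_left hD
  obtain ⟨Fz, hFz⟩ := hT.exists_isGadget hE hz hv hsub h2
  obtain hNy | ⟨w, hw⟩ := (evenNbrs E y).eq_empty_or_nonempty
  · exact absurd (IsGadgetPair.hasPathDecomp
      ⟨hne, hyz, isGadget_empty hy hNy, hFz, Finset.disjoint_empty_left _⟩ hE ih) hD
  · obtain ⟨hsub', h2'⟩ := (hT.hasPathDecomp_or_evenNbrs_subset hE ih hy hw).resolve_left hD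
    obtain ⟨Fy, hFy⟩ := hT.exists_isGadget hE hy hw hsub' h2'
    refine ⟨w, hw, by_contra fun hwv => hD (IsGadgetPair.hasPathDecomp
      ⟨hne, hyz, hFy, hFz, Finset.disjoint_left.2 fun u huw huv => hwv ?_⟩ hE ih)⟩
    rw [← hT.evenClosedNbhd_eq_of_mem (mem_evenNbrs.1 hv).2 huv,
      hT.evenClosedNbhd_eq_of_mem (mem_evenNbrs.1 hw).2 huw]
    exact self_mem_evenClosedNbhd E w

theorem hasPathDecomp_or_isSETLike (hE : Admissible E) (ih : HasPathDecompBelow E k) :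
    HasPathDecomp E k 0 ∨ IsSETLike E := by
  refine or_iff_not_imp_left.2 fun hD => ?_
  have hT := (hasPathDecomp_or_isTriangular hE ih).resolve_left hD
  have hattach (x t) (hx : parity E x = 1) (ht : t ∈ evenNbrs E x) :=
    (hT.hasPathDecomp_or_evenNbrs_subset hE ih hx ht).resolve_left hD
  exact ⟨hT, fun x t hx ht => (hattach x t hx ht).1, fun x t hx ht => (hattach x t hx ht).2,
    fun y z t hy hz hyz ht => (hT.hasPathDecomp_or_exists_mem hE ih hy hz hyz ht).resolve_left hD⟩

namespace IsSETLike

lemma card_evenClosedNbhd (h : IsSETLike E) (hE : Admissible E) (hv : parity E v = 0)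
    (hvw : s(v, w) ∈ E) : (evenClosedNbhd E v).card = 3 := by
  rw [hE.card_evenClosedNbhd, Nat.succ_inj]
  refine (h.card v hv).resolve_left fun hempty => ?_
  rcases parity_eq_zero_or_one E w with hw | hw
  · exact Finset.ne_empty_of_mem (mem_evenNbrs.2 ⟨hvw, hw⟩) hempty
  · have hvw' : v ∈ evenNbrs E w := mem_evenNbrs.2 ⟨Sym2.eq_swap ▸ hvw, hv⟩
    have hle := Finset.card_le_card (h.evenNbrs_subset w v hw hvw')
    rw [hE.card_evenClosedNbhd, hempty, Finset.card_empty] at hle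
    have := h.two_le w v hw hvw'
    lia

lemma mem_attachedSet_of_mem (h : IsSETLike E) (hv : parity E v = 0) (hx : x ∈ attachedSet E v)
    (hxy : s(x, y) ∈ E) : y ∈ attachedSet E v := by
  have hyx : s(y, x) ∈ E := Sym2.eq_swap ▸ hxy
  rcases hx with hx | ⟨hx, t, ht, htv⟩ <;> rcases parity_eq_zero_or_one E y with hy | hy
  · left
    rw [← h.evenClosedNbhd_eq_of_mem hv hx]
    exact evenNbrs_subset_evenClosedNbhd E x (mem_evenNbrs.2 ⟨hxy, hy⟩)
  · exact .inr ⟨hy, x, mem_evenNbrs.2 ⟨hyx, parity_eq_zero_of_mem_evenClosedNbhd hv hx⟩, hx⟩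
  · left
    rw [← h.evenClosedNbhd_eq_of_mem hv htv]
    exact h.evenNbrs_subset x t hx ht (mem_evenNbrs.2 ⟨hxy, hy⟩)
  · obtain ⟨r, hr, hrt⟩ := h.exists_mem y x t hy hx hyx ht
    exact .inr ⟨hy, r, hr, h.evenClosedNbhd_eq_of_mem hv htv ▸ hrt⟩

lemma isSETOn (h : IsSETLike E) (hE : Admissible E) (hv : parity E v = 0) (hvw : s(v, w) ∈ E) :
    IsSETOn E (attachedSet E v) (evenClosedNbhd E v) where
  card := h.card_evenClosedNbhd hE hv hvw
  subset _ hu := .inl hu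
  adj u hu t ht hut := (mem_evenNbrs.1 (mem_evenNbrs_of_evenClosedNbhd_eq
    ((h.evenClosedNbhd_eq_of_mem hv hu).trans (h.evenClosedNbhd_eq_of_mem hv ht).symm)
    hut.symm)).1
  parity_iff u hu := ⟨fun h0 => hu.resolve_right fun h1 => by lia,
    parity_eq_zero_of_mem_evenClosedNbhd hv⟩
  closed _ hx _ hxy := h.mem_attachedSet_of_mem hv hx hxy
  two_le x hx hx1 := by
    rcases hx with hx | ⟨-, t, ht, -⟩
    · have := parity_eq_zero_of_mem_evenClosedNbhd hv hx
      lia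
    · exact h.two_le x t hx1 ht

end IsSETLike

theorem Admissible.hasPathDecomp (hE : Admissible E) :
    HasPathDecomp E (Fintype.card V / 2) 0 := by
  induction E using Finset.strongInduction with
  | H E ih =>
  refine (hasPathDecomp_or_isSETLike hE ih).elim id fun h =>
    hasPathDecomp_of_forall_parity_ne_zero hE.loopless fun v w hvw hv => ?_
  exact hE.not_set _ _ (h.isSETOn hE hv hvw)

end Induction

/-! ### Walks and graphs -/

section Walks

lemma exists_walk_of_pathEdges (G : SimpleGraph V) (x : V) (l : List V)
    (h : ∀ e ∈ pathEdges (x :: l), e ∈ G.edgeSet) :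
    ∃ (y : V) (p : G.Walk x y), p.support = x :: l ∧
      (p.edges : Multiset (Sym2 V)) = pathEdges (x :: l) := by
  induction l generalizing x with
  | nil => exact ⟨x, .nil, by simp [pathEdges]⟩
  | cons a l ih =>
    simp only [pathEdges, Multiset.mem_cons] at h
    obtain ⟨y, p, hsupp, hedges⟩ := ih a fun e he => h e (.inr he)
    have hxa : G.Adj x a := h _ (.inl rfl)
    refine ⟨y, .cons hxa p, by simp [hsupp], ?_⟩
    rw [Walk.edges_cons, ← Multiset.cons_coe, hedges, pathEdges]

lemma exists_walks_of_pathEdges (G : SimpleGraph V) (L : List (List V))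
    (h : ∀ l ∈ L, l ≠ [] ∧ l.Nodup ∧ ∀ e ∈ pathEdges l, e ∈ G.edgeSet) :
    ∃ P : List (Σ a b : V, G.Walk a b), P.length = L.length ∧ (∀ p ∈ P, p.2.2.IsPath) ∧
      (P.flatMap (fun p => p.2.2.edges) : Multiset (Sym2 V)) =
        (L : Multiset (List V)).bind pathEdges := by
  induction L with
  | nil => exact ⟨[], by simp⟩
  | cons l L ih =>
    obtain ⟨P, hlen, hpath, hedges⟩ := ih fun l' hl' => h l' (List.mem_cons_of_mem _ hl')
    obtain ⟨hne, hnodup, hl⟩ := h l List.mem_cons_self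
    obtain ⟨x, l, rfl⟩ := List.exists_cons_of_ne_nil hne
    obtain ⟨y, p, hsupp, hp⟩ := exists_walk_of_pathEdges G x l hl
    refine ⟨⟨x, y, p⟩ :: P, by simp [hlen],
      List.forall_mem_cons.2 ⟨(Walk.isPath_def _).2 (hsupp ▸ hnodup), hpath⟩, ?_⟩
    rw [List.flatMap_cons, ← Multiset.coe_add, hedges, ← Multiset.cons_coe, Multiset.cons_bind, hp]

lemma exists_pathDecomp_of_flatMap_edges {G : SimpleGraph V} (P : List (Σ a b : V, G.Walk a b))
    (hpath : ∀ p ∈ P, p.2.2.IsPath) (hnodup : (P.flatMap fun p => p.2.2.edges).Nodup)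
    (hcover : ∀ e ∈ G.edgeSet, e ∈ P.flatMap fun p => p.2.2.edges) :
    ∃ D : PathDecomp G, pdCard D ≤ P.length := by
  refine ⟨⟨P.filter fun p => 0 < p.2.2.length, fun p hp => by simpa using (List.mem_filter.1 hp).2,
    fun p hp => hpath p (List.mem_filter.1 hp).1,
    (List.nodup_flatMap.1 hnodup).2.filter _ |>.imp fun hpq e hp hq => hpq hp hq,
    fun e he => ?_⟩, List.length_filter_le _ _⟩
  obtain ⟨p, hp, hep⟩ := List.mem_flatMap.1 (hcover e he)
  refine ⟨p, List.mem_filter.2 ⟨hp, ?_⟩, hep⟩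
  rw [decide_eq_true_eq, ← Walk.length_edges]
  exact List.length_pos_of_mem hep

theorem HasPathDecomp.exists_pathDecomp [DecidableEq V] {G : SimpleGraph V} [Fintype G.edgeSet]
    {k : ℕ} {g : V → ℕ} (h : HasPathDecomp G.edgeFinset k g) :
    ∃ D : PathDecomp G, pdCard D ≤ k := by
  obtain ⟨D, hD, hk, -⟩ := h
  obtain ⟨P, hlen, hpath, hedges⟩ := exists_walks_of_pathEdges G D.toList fun l hl => by
    rw [Multiset.mem_toList] at hl
    refine ⟨hD.ne_nil l hl, hD.nodup l hl, fun e he => mem_edgeFinset.1 ?_⟩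
    rw [← Finset.mem_val, ← hD.edges]
    exact Multiset.mem_bind.2 ⟨l, hl, he⟩
  rw [Multiset.coe_toList, hD.edges] at hedges
  obtain ⟨D', hD'⟩ := exists_pathDecomp_of_flatMap_edges P hpath
    (by rw [← Multiset.coe_nodup, hedges]; exact G.edgeFinset.nodup)
    (fun e he => by rw [← Multiset.mem_coe, hedges]; exact mem_edgeFinset.2 he)
  exact ⟨D', hD'.trans (by rwa [hlen, Multiset.length_toList])⟩

end Walks

section Graphs

variable [Fintype V] [DecidableEq V] (G : SimpleGraph V) [DecidableRel G.Adj]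

lemma edgeDeg_edgeFinset (v : V) : edgeDeg G.edgeFinset v = ndeg G v := by
  rw [ndeg, edgeDeg, ← incidenceFinset_eq_filter, card_incidenceFinset_eq_degree,
    ← card_neighborFinset_eq_degree, ← Set.ncard_coe_finset, coe_neighborFinset]
  rfl

lemma even_ndeg_iff (v : V) : Even (ndeg G v) ↔ parity G.edgeFinset v = 0 := by
  rw [parity, edgeDeg_edgeFinset, Nat.even_iff]

lemma coe_evenNbrs_edgeFinset (v : V) :
    (evenNbrs G.edgeFinset v : Set V) = {w | G.Adj v w ∧ Even (ndeg G w)} := by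
  ext w
  simp [mem_evenNbrs, even_ndeg_iff]

variable {G}

lemma admissible_edgeFinset
    (h : ∀ v, Even (ndeg G v) → {w | G.Adj v w ∧ Even (ndeg G w)}.ncard ≤ 3)
    (hset : ∀ W T, ¬ IsSETOn G.edgeFinset W T) : Admissible G.edgeFinset where
  loopless := by simp
  card_le v hv := by
    rw [← Set.ncard_coe_finset, coe_evenNbrs_edgeFinset]
    exact h v ((even_ndeg_iff G v).2 hv)
  not_set := hset

lemma IsSETOn.eq_univ {W : Set V} {T : Finset V} (hT : IsSETOn G.edgeFinset W T)
    (hG : G.Connected) : W = Set.univ := by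
  obtain ⟨a, ha⟩ := Finset.card_pos.1 (by rw [hT.card]; exact Nat.succ_pos 2)
  refine Set.eq_univ_of_forall fun v => ?_
  obtain ⟨p⟩ := hG.preconnected a v
  have hclosed {x y} (hxy : G.Walk x y) : x ∈ W → y ∈ W := by
    induction hxy with
    | nil => exact id
    | cons huv _ ih => exact fun hx => ih (hT.closed _ hx _ (mem_edgeFinset.2 huv))
  exact hclosed p (hT.subset a ha)

lemma IsSETOn.isSETGraph {W : Set V} {T : Finset V} (hT : IsSETOn G.edgeFinset W T)
    (hG : G.Connected) : IsSETGraph G := by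
  obtain rfl := hT.eq_univ hG
  have hadj {u v : V} : s(u, v) ∈ G.edgeFinset ↔ G.Adj u v := mem_edgeFinset
  obtain ⟨a, b, c, hab, hac, hbc, rfl⟩ := Finset.card_eq_three.1 hT.card
  refine ⟨⟨a, b, c, hab, hac, hbc, ?_, hadj.1 (hT.adj a (by simp) b (by simp) hab),
    hadj.1 (hT.adj a (by simp) c (by simp) hac), hadj.1 (hT.adj b (by simp) c (by simp) hbc)⟩,
    fun v hv => ?_⟩
  · ext v
    simpa [even_ndeg_iff] using hT.parity_iff v (Set.mem_univ v)
  · have hv1 : parity G.edgeFinset v = 1 := by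
      rwa [parity, edgeDeg_edgeFinset, ← Nat.odd_iff]
    obtain ⟨w₁, hw₁, w₂, hw₂, hne⟩ :=
      Finset.one_lt_card.1 (hT.two_le v (Set.mem_univ v) hv1)
    rw [mem_evenNbrs, hadj, ← even_ndeg_iff] at hw₁ hw₂
    exact ⟨w₁, w₂, hne, hw₁.1, hw₂.1, hw₁.2, hw₂.2⟩

end Graphs

theorem gallai_or_set_of_max_edegree_three [Fintype V] (G : SimpleGraph V)
    (hconn : G.Connected)
    (h : ∀ v : V, Even (ndeg G v) → {w | G.Adj v w ∧ Even (ndeg G w)}.ncard ≤ 3) :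
    (∃ D : PathDecomp G, pdCard D ≤ Fintype.card V / 2) ∨ IsSETGraph G := by
  classical
  by_cases hset : ∃ W T, IsSETOn G.edgeFinset W T
  · obtain ⟨W, T, hT⟩ := hset
    exact .inr (hT.isSETGraph hconn)
  · push Not at hset
    exact .inl (admissible_edgeFinset h hset).hasPathDecomp.exists_pathDecomp
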